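/- For every odd integer k ≥ 1 and every integer t ≥ 4, every coloring of the edges of the complete graph on (t − 1)·5^{(k−1)/2} + 1 vertices using k colors contains either a rainbow triangle or a monochromatic copy of P_t^+. Together with the matching lower-bound construction, this shows gr_k(K_3 : P_t^+) = (t − 1)·5^{(k−1)/2} + 1 for odd k. -/

import Mathlib

open SimpleGraph

/-- `S_t^+`: the star on `t` vertices (center `0`, leaves `1, …, t-1`)
together with one extra edge between the leaves `1` and `2`, forming a triangle. -/
def starPlus (t : ℕ) : SimpleGraph (Fin t) :=
  SimpleGraph.fromRel (fun a b => a.val = 0 ∨ (a.val = 1 ∧ b.val = 2))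

/-- `P_t^+`: the path on `t` vertices `0, 1, …, t-1` (in order) together with
the extra edge between `0` and `2`, forming a triangle at one end. -/
def pathPlus (t : ℕ) : SimpleGraph (Fin t) :=
  SimpleGraph.fromRel (fun a b => b.val = a.val + 1 ∨ (a.val = 0 ∧ b.val = 2))

/-- An edge-coloring `c` of the complete graph on `V` contains a copy of `H`
in color `col`: an injective map of the vertices of `H` into `V` sending every
edge of `H` to a pair colored `col`. -/
def HasCopyIn {V C α : Type*} (c : Sym2 V → C) (col : C) (H : SimpleGraph α) : Prop :=
  ∃ f : α → V, Function.Injective f ∧ ∀ a b : α, H.Adj a b → c s(f a, f b) = col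

/-- An edge-coloring `c` of the complete graph on `V` contains a monochromatic copy of `H`. -/
def HasMonoCopy {V C α : Type*} (c : Sym2 V → C) (H : SimpleGraph α) : Prop :=
  ∃ col : C, HasCopyIn c col H

/-- An edge-coloring `c` of the complete graph on `V` contains a rainbow triangle:
three vertices whose three pairwise edges get pairwise distinct colors. -/
def HasRainbowTriangle {V C : Type*} (c : Sym2 V → C) : Prop :=
  ∃ u v w : V, u ≠ v ∧ u ≠ w ∧ v ≠ w ∧
    c s(u, v) ≠ c s(u, w) ∧ c s(u, v) ≠ c s(v, w) ∧ c s(u, w) ≠ c s(v, w)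

/-- The `k`-color Gallai-Ramsey number `gr_k(K_3 : H)`: the least `n` such that every
`k`-coloring of the edges of `K_n` contains a rainbow triangle or a monochromatic copy of `H`. -/
noncomputable def grK3 (k : ℕ) {α : Type*} (H : SimpleGraph α) : ℕ :=
  sInf {n : ℕ | ∀ c : Sym2 (Fin n) → Fin k, HasRainbowTriangle c ∨ HasMonoCopy c H}

/-- The `2`-color Ramsey number `R(G, H)`: the least `n` such that every red/blue
(`0`/`1`) coloring of the edges of `K_n` contains a red copy of `G` or a blue copy of `H`. -/
noncomputable def ramsey2 {α β : Type*} (G : SimpleGraph α) (H : SimpleGraph β) : ℕ :=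
  sInf {n : ℕ | ∀ c : Sym2 (Fin n) → Fin 2, HasCopyIn c 0 G ∨ HasCopyIn c 1 H}

/-!
The lower bound comes from blowing up the pentagon colouring of `K_5` repeatedly with two new
colours each time. The pentagon colouring has no monochromatic triangle, so a monochromatic copy of
`P_t^+`, which is connected and contains a triangle, would lie inside a single blown-up vertex.

For the upper bound, a colouring without a rainbow triangle has a Gallai partition, with only two
colours `r`, `b` between its parts. Call a part heavy if it has at least `t / 2` vertices, and light
otherwise. The induction, on the palette and on the vertex set `a`, bounds `|a| + ∑ q, |S q|`, where
for each colour `q` of the palette `S q` is a set of fewer than `t / 2` vertices joined to `a`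
completely in colour `q`. This weighted bound passes from `a` to a heavy part: the vertices of light
parts that are joined to it are put into `S r` or `S b`. When two heavy parts are joined in a
colour, neither of them has an inner edge of that colour, so the palette shrinks. As the reduced
graphs on the heavy parts contain no monochromatic triangle, there are at most `R(3, 3) - 1 = 5`
heavy parts, whence a factor `5` for every two colours.
-/

namespace GallaiRamsey

open scoped Classical

section PathPlus

variable {V W C α : Type*} {G : SimpleGraph V} {H : SimpleGraph W} {l m : List V} {e v : V} {t : ℕ}

/-- The graph formed by the edges of colour `q`. -/
def colorGraph (c : Sym2 V → C) (q : C) : SimpleGraph V := fromEdgeSet (c ⁻¹' {q})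

@[simp]
theorem colorGraph_adj {c : Sym2 V → C} {q : C} {x y : V} :
    (colorGraph c q).Adj x y ↔ c s(x, y) = q ∧ x ≠ y :=
  fromEdgeSet_adj _

theorem hasCopyIn_iff_isContained {c : Sym2 V → C} {q : C} {F : SimpleGraph α} :
    HasCopyIn c q F ↔ F ⊑ colorGraph c q := by
  constructor
  · rintro ⟨f, hf, hc⟩
    exact ⟨⟨⟨f, fun h => colorGraph_adj.2 ⟨hc _ _ h, hf.ne h.ne⟩⟩, hf⟩⟩
  · rintro ⟨f⟩
    exact ⟨f, f.injective, fun _ _ h => (colorGraph_adj.1 (f.toHom.map_adj h)).1⟩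

/-- `IsPathPlus G l` says that `l` lists the vertices of a copy of `P_t^+` in `G`. The list starts
at the tip `v_t` of the path and ends with the triangle `v_3, v_2, v_1`, so that extending the path
is `List.cons`. -/
inductive IsPathPlus (G : SimpleGraph V) : List V → Prop
  | triangle {x y z : V} : G.Adj x y → G.Adj y z → G.Adj x z → IsPathPlus G [x, y, z]
  | cons {x e : V} {l : List V} :
      x ∉ e :: l → G.Adj x e → IsPathPlus G (e :: l) → IsPathPlus G (x :: e :: l)

theorem IsPathPlus.nodup (h : IsPathPlus G l) : l.Nodup := by
  induction h with
  | triangle hxy hyz hxz => simp [hxy.ne, hyz.ne, hxz.ne]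
  | cons hx _ _ ih => exact List.nodup_cons.2 ⟨hx, ih⟩

theorem IsPathPlus.isChain (h : IsPathPlus G l) : l.IsChain G.Adj := by
  induction h with
  | triangle hxy hyz _ => simp [hxy, hyz]
  | cons _ hxe _ ih => exact List.isChain_cons_cons.2 ⟨hxe, ih⟩

theorem IsPathPlus.three_le_length (h : IsPathPlus G l) : 3 ≤ l.length := by
  induction h with
  | triangle => rfl
  | cons _ _ _ ih => exact ih.trans (Nat.le_succ _)

theorem IsPathPlus.exists_cons_eq (h : IsPathPlus G l) : ∃ e l', l = e :: l' := by
  cases h <;> exact ⟨_, _, rfl⟩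

theorem IsPathPlus.exists_eq_append (h : IsPathPlus G l) :
    ∃ m x y z, l = m ++ [x, y, z] ∧ G.Adj x z := by
  induction h with
  | triangle _ _ hxz => exact ⟨[], _, _, _, rfl, hxz⟩
  | @cons w _ _ _ _ _ ih =>
    obtain ⟨m, x, y, z, hl, hxz⟩ := ih
    exact ⟨w :: m, x, y, z, by rw [hl, List.cons_append], hxz⟩

theorem IsPathPlus.map (h : IsPathPlus G l) {f : V → W} (hf : Set.InjOn f {x | x ∈ l})
    (hadj : ∀ x ∈ l, ∀ y ∈ l, G.Adj x y → H.Adj (f x) (f y)) : IsPathPlus H (l.map f) := by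
  induction h with
  | triangle hxy hyz hxz =>
    exact .triangle (hadj _ (by simp) _ (by simp) hxy) (hadj _ (by simp) _ (by simp) hyz)
      (hadj _ (by simp) _ (by simp) hxz)
  | cons hx hxe _ ih =>
    refine .cons ?_ (hadj _ (by simp) _ (by simp) hxe)
      (ih (hf.mono fun y hy => List.mem_cons_of_mem _ hy) fun y hy z hz =>
        hadj y (List.mem_cons_of_mem _ hy) z (List.mem_cons_of_mem _ hz))
    rw [← List.map_cons, List.mem_map]
    rintro ⟨y, hy, hyx⟩
    exact hx (hf (List.mem_cons_of_mem _ hy) List.mem_cons_self hyx ▸ hy)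

theorem IsPathPlus.of_append (h : IsPathPlus G (m ++ l)) (hl : 3 ≤ l.length) :
    IsPathPlus G l := by
  induction m with
  | nil => exact h
  | cons a m ih =>
    refine ih ?_
    rcases hml : m ++ l with _ | ⟨b, _ | ⟨d, _ | ⟨f, k⟩⟩⟩
    all_goals have hlen := congrArg List.length hml
    all_goals simp only [List.length_append, List.length_cons, List.length_nil] at hlen
    iterate 3 omega
    rw [List.cons_append, hml] at h
    cases h with
    | cons _ _ h => exact h

theorem IsPathPlus.append (h : IsPathPlus G (e :: l)) (hnodup : (m ++ e :: l).Nodup)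
    (hchain : (m ++ [e]).IsChain G.Adj) : IsPathPlus G (m ++ e :: l) := by
  induction m with
  | nil => exact h
  | cons a m ih =>
    have hm := ih hnodup.of_cons hchain.tail
    have ha := (List.nodup_cons.1 hnodup).1
    cases m with
    | nil => exact hm.cons ha (List.isChain_cons_cons.1 hchain).1
    | cons b m => exact hm.cons ha (List.isChain_cons_cons.1 hchain).1

theorem IsPathPlus.of_isChain (hnodup : l.Nodup) (hchain : l.IsChain G.Adj)
    (hv : ∀ x ∈ l, G.Adj x v) (hl : 2 ≤ l.length) : IsPathPlus G (l ++ [v]) := by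
  induction l with
  | nil => simp at hl
  | cons x l ih =>
    rcases l with _ | ⟨y, _ | ⟨z, l⟩⟩
    · simp at hl
    · exact .triangle (List.isChain_cons_cons.1 hchain).1 (hv _ (by simp)) (hv _ (by simp))
    · have h := ih hnodup.of_cons hchain.tail (fun w hw => hv w (List.mem_cons_of_mem _ hw))
        (by simp)
      refine h.cons ?_ (List.isChain_cons_cons.1 hchain).1
      have hne : x ≠ v := (hv x (by simp)).ne
      simpa [hne] using (List.nodup_cons.1 hnodup).1

theorem IsPathPlus.isContained (h : IsPathPlus G l) : pathPlus l.length ⊑ G := by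
  have hadj (a b : Fin l.length) (hab : b.val = a.val + 1 ∨ a.val = 0 ∧ b.val = 2) :
      G.Adj (l.reverse[a.val]'(by simp)) (l.reverse[b.val]'(by simp)) := by
    obtain ⟨a, ha⟩ := a
    obtain ⟨b, hb⟩ := b
    rcases hab with rfl | ⟨rfl, rfl⟩
    · have hchain : l.reverse.IsChain G.Adj :=
        List.isChain_reverse.2 (h.isChain.imp fun _ _ => Adj.symm)
      exact List.isChain_iff_getElem.1 hchain a (by simpa using hb)
    · obtain ⟨m, x, y, z, rfl, hxz⟩ := h.exists_eq_append
      simpa using hxz.symm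
  refine ⟨⟨⟨fun i => l.reverse[i.val]'(by simp), fun {a b} hab => ?_⟩, fun a b hab => ?_⟩⟩
  · rcases ((fromRel_adj _ _ _).1 hab).2 with hab | hab
    · exact hadj a b hab
    · exact (hadj b a hab).symm
  · exact Fin.ext ((List.nodup_reverse.2 h.nodup).getElem_inj_iff.1 hab)

theorem IsPathPlus.length_lt (h : IsPathPlus G l) (ht : 3 ≤ t) (hfree : (pathPlus t).Free G) :
    l.length < t := by
  by_contra! hlt
  have hdrop : (l.drop (l.length - t)).length = t := by rw [List.length_drop]; omega
  have := IsPathPlus.of_append (m := l.take (l.length - t)) (l := l.drop (l.length - t))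
    (by rwa [List.take_append_drop]) (by omega)
  exact hfree (hdrop ▸ this.isContained)

end PathPlus

section GreedyGrowth

variable {V : Type*} {G : SimpleGraph V} {A B S : Finset V} {l : List V} {e x y z : V} {t : ℕ}

theorem IsPathPlus.exists_cons (h : IsPathPlus G (e :: l))
    (hlt : l.countP (· ∈ A) < {x ∈ A | G.Adj x e}.card) : ∃ x ∈ A, IsPathPlus G (x :: e :: l) := by
  have hcard : (l.filter (· ∈ A)).toFinset.card < {x ∈ A | G.Adj x e}.card :=
    (List.toFinset_card_le _).trans_lt (by rwa [← List.countP_eq_length_filter])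
  obtain ⟨x, hx, hxl⟩ := Finset.exists_mem_notMem_of_card_lt_card hcard
  obtain ⟨hxA, hxe⟩ := Finset.mem_filter.1 hx
  refine ⟨x, hxA, h.cons ?_ hxe⟩
  simpa [hxe.ne, hxA] using hxl

theorem pathPlus_isContained_of_card_le_degree (ht : 3 ≤ t)
    (hdeg : ∀ x ∈ S, t ≤ {y ∈ S | G.Adj y x}.card + 1) (hx : x ∈ S)
    (hxy : G.Adj x y) (hyz : G.Adj y z) (hxz : G.Adj x z) : pathPlus t ⊑ G := by
  suffices H : ∀ n, 3 ≤ n → n ≤ t → ∃ e l, e ∈ S ∧ IsPathPlus G (e :: l) ∧ (e :: l).length = n by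
    obtain ⟨e, l, -, h, rfl⟩ := H t ht le_rfl
    exact h.isContained
  intro n hn
  induction n, hn using Nat.le_induction with
  | base => exact fun _ => ⟨x, [y, z], hx, .triangle hxy hyz hxz, rfl⟩
  | succ n _ ih =>
    intro hnt
    obtain ⟨e, l, he, h, hlen⟩ := ih (by omega)
    obtain ⟨w, hw, hwl⟩ := h.exists_cons (A := S) <| by
      have := hdeg e he
      have := List.countP_le_length (p := fun x => decide (x ∈ S)) (l := l)
      rw [List.length_cons] at hlen
      omega
    exact ⟨w, e :: l, hw, hwl, by rw [List.length_cons, hlen]⟩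

theorem pathPlus_isContained_of_bipartite_degree (hAB : Disjoint A B) (ht : 3 ≤ t)
    (hA : ∀ x ∈ A, t ≤ 2 * {y ∈ B | G.Adj y x}.card + 1)
    (hB : ∀ y ∈ B, t ≤ 2 * {x ∈ A | G.Adj x y}.card)
    (hx : x ∈ A) (hy : y ∈ B) (hz : z ∈ A)
    (hxy : G.Adj x y) (hyz : G.Adj y z) (hxz : G.Adj x z) : pathPlus t ⊑ G := by
  have hnotB : ∀ {x}, x ∈ A → x ∉ B := fun h => Finset.disjoint_left.1 hAB h
  have hnotA : ∀ {x}, x ∈ B → x ∉ A := fun h => Finset.disjoint_right.1 hAB h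
  suffices H : ∀ n, 3 ≤ n → n ≤ t → ∃ e l, IsPathPlus G (e :: l) ∧ (e :: l).length = n ∧
      (e :: l).countP (· ∈ A) = (n + 1) / 2 ∧ (e :: l).countP (· ∈ B) = n / 2 ∧
      (n % 2 = 1 → e ∈ A) ∧ (n % 2 = 0 → e ∈ B) by
    obtain ⟨e, l, h, rfl, -⟩ := H t ht le_rfl
    exact h.isContained
  intro n hn
  induction n, hn using Nat.le_induction with
  | base =>
    refine fun _ => ⟨x, [y, z], .triangle hxy hyz hxz, rfl, ?_, ?_, fun _ => hx, by simp⟩ <;>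
      simp [hx, hy, hz, hnotB, hnotA]
  | succ n _ ih =>
    intro hnt
    obtain ⟨e, l, h, hlen, hcA, hcB, hodd, heven⟩ := ih (by omega)
    rcases Nat.mod_two_eq_zero_or_one n with hn | hn
    · have hcount : l.countP (· ∈ A) ≤ (e :: l).countP (· ∈ A) := by simp [List.countP_cons]
      obtain ⟨w, hw, hwl⟩ := h.exists_cons (A := A) (by have := hB e (heven hn); omega)
      refine ⟨w, e :: l, hwl, by rw [List.length_cons, hlen], ?_, ?_, fun _ => hw, by omega⟩
      · rw [List.countP_cons_of_pos (by simpa), hcA]; omega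
      · rw [List.countP_cons_of_neg (by simpa using hnotB hw), hcB]; omega
    · have hcount : l.countP (· ∈ B) ≤ (e :: l).countP (· ∈ B) := by simp [List.countP_cons]
      obtain ⟨w, hw, hwl⟩ := h.exists_cons (A := B) (by have := hA e (hodd hn); omega)
      refine ⟨w, e :: l, hwl, by rw [List.length_cons, hlen], ?_, ?_, by omega, fun _ => hw⟩
      · rw [List.countP_cons_of_neg (by simpa using hnotA hw), hcA]; omega
      · rw [List.countP_cons_of_pos (by simpa), hcB]; omega

theorem pathPlus_isContained_of_completeBipartite (hAB : ∀ x ∈ A, ∀ y ∈ B, G.Adj x y) (ht : 3 ≤ t)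
    (hA : t ≤ 2 * A.card) (hB : t ≤ 2 * B.card + 1) (hx : x ∈ A) (hz : z ∈ A) (hxz : G.Adj x z) :
    pathPlus t ⊑ G := by
  obtain ⟨y, hy⟩ : B.Nonempty := Finset.card_pos.1 (by omega)
  have hdisj : Disjoint A B := Finset.disjoint_left.2 fun w hwA hwB => (hAB w hwA w hwB).ne rfl
  refine pathPlus_isContained_of_bipartite_degree hdisj ht (fun x hx => ?_) (fun y hy => ?_) hx hy
    hz (hAB x hx y hy) (hAB z hz y hy).symm hxz
  · rwa [Finset.filter_true_of_mem fun y hy => (hAB x hx y hy).symm]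
  · rwa [Finset.filter_true_of_mem fun x hx => hAB x hx y hy]

end GreedyGrowth

section Multipartite

variable {V ι : Type*} {G H : SimpleGraph V} {S X : Finset V} {π : V → ι} {t : ℕ} {v : V}

theorem exists_enumeration_with_contiguous_fibers (X : Finset V) (π : V → ι) :
    ∃ f : Fin X.card → V, Function.Injective f ∧ (∀ i, f i ∈ X) ∧
      ∀ i j k, i ≤ j → j ≤ k → π (f i) = π (f k) → π (f j) = π (f k) := by
  let : LinearOrder ι := linearOrderOfSTO WellOrderingRel
  let f : Fin X.card → V := fun i => X.equivFin.symm i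
  have hmono : Monotone ((π ∘ f) ∘ Tuple.sort (π ∘ f)) := Tuple.monotone_sort _
  refine ⟨f ∘ Tuple.sort (π ∘ f), ?_, fun i => (X.equivFin.symm _).2, fun i j k hij hjk h => ?_⟩
  · exact (Subtype.val_injective.comp X.equivFin.symm.injective).comp (Equiv.injective _)
  · exact le_antisymm (hmono hjk) (h ▸ hmono hij)

/-- The set `S`, split into parts by `π`, spans a complete multipartite graph in `G` (which may
have further edges inside the parts), and each part has fewer than `t / 2` vertices. -/
structure IsLightMultipartite (G : SimpleGraph V) (S : Finset V) (π : V → ι) (t : ℕ) : Prop where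
  adj : ∀ ⦃x⦄, x ∈ S → ∀ ⦃y⦄, y ∈ S → π x ≠ π y → G.Adj x y
  light : ∀ ⦃x⦄, x ∈ S → 2 * {y ∈ S | π y = π x}.card < t

theorem IsLightMultipartite.mono (h : IsLightMultipartite G S π t) (hX : X ⊆ S)
    (hH : ∀ ⦃x⦄, x ∈ X → ∀ ⦃y⦄, y ∈ X → π x ≠ π y → G.Adj x y → H.Adj x y) :
    IsLightMultipartite H X π t where
  adj _ hx _ hy hne := hH hx hy hne (h.adj (hX hx) (hX hy) hne)
  light _ hx := (Nat.mul_le_mul_left 2 (Finset.card_le_card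
    (Finset.filter_subset_filter _ hX))).trans_lt (h.light (hX hx))

/-- The order `0, h, 1, h + 1, 2, …` with `h = ⌈m / 2⌉`: consecutive terms differ by `h` or
`h - 1`. -/
theorem exists_interleaving (m : ℕ) :
    ∃ g : Fin m → Fin m, Function.Injective g ∧ ∀ k (hk : k + 1 < m),
      m ≤ 2 * (g ⟨k + 1, hk⟩ - g ⟨k, by omega⟩ : ℕ) + 2 ∧ g ⟨k, by omega⟩ < g ⟨k + 1, hk⟩ ∨
      m ≤ 2 * (g ⟨k, by omega⟩ - g ⟨k + 1, hk⟩ : ℕ) + 2 ∧ g ⟨k + 1, hk⟩ < g ⟨k, by omega⟩ := by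
  let g (k : Fin m) : Fin m :=
    ⟨if k.val % 2 = 0 then k / 2 else (m + 1) / 2 + k / 2, by split_ifs <;> omega⟩
  refine ⟨g, fun k k' hk => ?_, fun k hk => ?_⟩
  · have hk := congrArg Fin.val hk
    dsimp only [g] at hk
    ext
    split_ifs at hk <;> omega
  · simp only [Fin.lt_def, g]
    rcases Nat.mod_two_eq_zero_or_one k with hk2 | hk2
    · rw [if_pos hk2, if_neg (by omega)]
      omega
    · rw [if_pos (by omega), if_neg (by omega)]
      omega

/-- List the vertices part by part and interleave the two halves of the list: the positions of
consecutive vertices then differ by at least the size of a part. -/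
theorem IsLightMultipartite.exists_isChain (h : IsLightMultipartite G X π t) (hX : t ≤ X.card) :
    ∃ l : List V, l.Nodup ∧ l.IsChain G.Adj ∧ (∀ x ∈ l, x ∈ X) ∧ l.length = X.card := by
  obtain ⟨f, hf_inj, hf, hf_fib⟩ := exists_enumeration_with_contiguous_fibers X π
  have hadj (i j : Fin X.card) (hij : X.card ≤ 2 * (j - i : ℕ) + 2) (hlt : i < j) :
      G.Adj (f i) (f j) := by
    refine h.adj (hf i) (hf j) fun hπ => ?_
    have hsub : (Finset.Icc i j).image f ⊆ {y ∈ X | π y = π (f j)} := by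
      intro y hy
      obtain ⟨k, hk, rfl⟩ := Finset.mem_image.1 hy
      have hk := Finset.mem_Icc.1 hk
      exact Finset.mem_filter.2 ⟨hf k, hf_fib i k j hk.1 hk.2 hπ⟩
    have hcard := Finset.card_le_card hsub
    rw [Finset.card_image_of_injective _ hf_inj, Fin.card_Icc] at hcard
    have := h.light (hf j)
    have := Fin.lt_def.1 hlt
    omega
  obtain ⟨g, hg_inj, hg⟩ := exists_interleaving X.card
  refine ⟨List.ofFn (f ∘ g), List.nodup_ofFn.2 (hf_inj.comp hg_inj),
    List.isChain_iff_getElem.2 fun k hk => ?_, by simp [hf], by simp⟩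
  simp only [List.getElem_ofFn, Function.comp_apply]
  rcases hg k (by simpa using hk) with ⟨hdist, hlt⟩ | ⟨hdist, hlt⟩
  · exact hadj _ _ hdist hlt
  · exact (hadj _ _ hdist hlt).symm

theorem length_add_one_lt_of_adj {l : List V} (hfree : (pathPlus t).Free G) (ht : 4 ≤ t)
    (hnodup : l.Nodup) (hchain : l.IsChain G.Adj) (hv : ∀ x ∈ l, G.Adj x v) :
    l.length + 1 < t := by
  by_cases hl : 2 ≤ l.length
  · simpa using (IsPathPlus.of_isChain hnodup hchain hv hl).length_lt (by omega) hfree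
  · omega

theorem IsLightMultipartite.two_mul_card_le (h : IsLightMultipartite G S π t)
    (hfree : (pathPlus t).Free G) (ht : 4 ≤ t) : 2 * S.card ≤ 3 * (t - 1) := by
  rcases S.eq_empty_or_nonempty with rfl | ⟨v, hv⟩
  · simp
  by_contra! hlt
  have hlight := h.light hv
  have hcard := Finset.card_filter_add_card_filter_not (s := S) (fun x => π x = π v)
  obtain ⟨l, hnodup, hchain, hmem, hlen⟩ :=
    (h.mono (H := G) (Finset.filter_subset (fun x => ¬π x = π v) S)
      fun _ _ _ _ _ hxy => hxy).exists_isChain (by omega)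
  have := length_add_one_lt_of_adj (v := v) hfree ht hnodup hchain fun x hx =>
    have hx := Finset.mem_filter.1 (hmem x hx)
    h.adj hx.1 hv hx.2
  omega

end Multipartite

section TwoColorMultipartite

variable {V ι : Type*} {G H : SimpleGraph V} {S B X Y : Finset V} {π : V → ι} {l : List V}
  {t s : ℕ} {v : V}

/-- A state of depth-first search in the graph induced by `G` on `B`: the vertices of `X` are
exhausted, and the stack `l` is a path (with its top first). -/
structure IsSearchState (G : SimpleGraph V) (B X : Finset V) (l : List V) : Prop where
  subset : X ⊆ B
  nodup : l.Nodup
  isChain : l.IsChain G.Adj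
  mem_stack : ∀ x ∈ l, x ∈ B \ X
  not_adj : ∀ x ∈ X, ∀ y ∈ B \ X, y ∉ l → ¬G.Adj x y

theorem IsSearchState.push (h : IsSearchState G B X l) {y : V} (hy : y ∈ B \ X) (hyl : y ∉ l)
    (hchain : (y :: l).IsChain G.Adj) : IsSearchState G B X (y :: l) where
  subset := h.subset
  nodup := List.nodup_cons.2 ⟨hyl, h.nodup⟩
  isChain := hchain
  mem_stack := List.forall_mem_cons.2 ⟨hy, h.mem_stack⟩
  not_adj x hx z hz hzl := h.not_adj x hx z hz fun hz => hzl (List.mem_cons_of_mem _ hz)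

theorem IsSearchState.pop {e : V} (h : IsSearchState G B X (e :: l))
    (he : ∀ y ∈ B \ X, y ∉ e :: l → ¬G.Adj y e) : IsSearchState G B (insert e X) l where
  subset := Finset.insert_subset (Finset.mem_sdiff.1 (h.mem_stack e (by simp))).1 h.subset
  nodup := h.nodup.of_cons
  isChain := h.isChain.tail
  mem_stack x hx := by
    have hxe : x ≠ e := fun heq => (List.nodup_cons.1 h.nodup).1 (heq ▸ hx)
    simpa [hxe] using h.mem_stack x (List.mem_cons_of_mem _ hx)
  not_adj x hx y hy hyl := by
    simp only [Finset.mem_sdiff, Finset.mem_insert, not_or] at hy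
    have hyX := Finset.mem_sdiff.2 ⟨hy.1, hy.2.2⟩
    have hyel : y ∉ e :: l := by simpa using ⟨hy.2.1, hyl⟩
    rcases Finset.mem_insert.1 hx with rfl | hx
    · exact fun h => he y hyX hyel h.symm
    · exact h.not_adj x hx y hyX hyel

theorem exists_isSearchState (hs : s ≤ 2 * B.card) :
    ∃ X l, IsSearchState G B X l ∧ 2 * X.card + l.length = s := by
  induction s with
  | zero => exact ⟨∅, [], ⟨by simp, by simp, by simp, by simp, by simp⟩, rfl⟩
  | succ s ih =>
    obtain ⟨X, l, h, hcard⟩ := ih (by omega)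
    rcases l with _ | ⟨e, l⟩
    · obtain ⟨y, hyB, hyX⟩ := Finset.exists_mem_notMem_of_card_lt_card (s := X) (t := B)
        (by rw [List.length_nil] at hcard; omega)
      exact ⟨X, [y], h.push (Finset.mem_sdiff.2 ⟨hyB, hyX⟩) (by simp) (by simp),
        congrArg (· + 1) hcard⟩
    by_cases hpush : ∃ y ∈ B \ X, y ∉ e :: l ∧ G.Adj y e
    · obtain ⟨y, hy, hyl, hye⟩ := hpush
      exact ⟨X, y :: e :: l, h.push hy hyl (List.isChain_cons_cons.2 ⟨hye, h.isChain⟩),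
        congrArg (· + 1) hcard⟩
    · push Not at hpush
      refine ⟨insert e X, l, h.pop hpush, ?_⟩
      rw [Finset.card_insert_of_notMem (Finset.mem_sdiff.1 (h.mem_stack e (by simp))).2]
      rw [List.length_cons] at hcard
      omega

theorem IsLightMultipartite.two_mul_card_lt_card_neighbors (h : IsLightMultipartite G S π t)
    (hX : X ⊆ S) (hv : v ∈ S) (hadj : ∀ x ∈ X, π x ≠ π v → H.Adj x v) :
    2 * X.card < 2 * {x ∈ X | H.Adj x v}.card + t := by
  have hcover : X ⊆ {x ∈ X | H.Adj x v} ∪ {x ∈ S | π x = π v} := by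
    intro x hx
    by_cases hπ : π x = π v <;> simp [hx, hX hx, hπ, hadj x hx]
  have := h.light hv
  have := (Finset.card_le_card hcover).trans (Finset.card_union_le _ _)
  omega

theorem IsLightMultipartite.pathPlus_isContained (h : IsLightMultipartite (G ⊔ H) S π t)
    (ht : 3 ≤ t) (hXS : X ⊆ S) (hYS : Y ⊆ S) (hXY : Disjoint X Y) (hX : t ≤ X.card)
    (hY : t ≤ Y.card) (hG : ∀ x ∈ X, ∀ y ∈ Y, ¬G.Adj x y) {x x' : V} (hx : x ∈ X) (hx' : x' ∈ X)
    (hadj : H.Adj x x') : pathPlus t ⊑ H := by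
  have hH : ∀ {x}, x ∈ X → ∀ {y}, y ∈ Y → π x ≠ π y → H.Adj x y := fun hx _ hy hne =>
    ((h.adj (hXS hx) (hYS hy) hne).resolve_left (hG _ hx _ hy))
  obtain ⟨y, hy, hyx⟩ : ∃ y ∈ Y, y ∉ {y ∈ S | π y = π x} ∪ {y ∈ S | π y = π x'} := by
    refine Finset.exists_mem_notMem_of_card_lt_card ((Finset.card_union_le _ _).trans_lt ?_)
    have := h.light (hXS hx)
    have := h.light (hXS hx')
    omega
  simp only [Finset.mem_union, Finset.mem_filter, hYS hy, true_and, not_or] at hyx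
  refine pathPlus_isContained_of_bipartite_degree hXY ht (fun z hz => ?_) (fun z hz => ?_) hx hy hx'
    (hH hx hy (Ne.symm hyx.1)) (hH hx' hy (Ne.symm hyx.2)).symm hadj
  · have := h.two_mul_card_lt_card_neighbors hYS (hXS hz) fun y hy hne => (hH hz hy hne.symm).symm
    omega
  · have := h.two_mul_card_lt_card_neighbors hXS (hYS hz) fun x hx hne => hH hx hz hne
    omega

theorem IsLightMultipartite.card_le_of_dominating (h : IsLightMultipartite (G ⊔ H) S π t)
    (hG : (pathPlus t).Free G) (hH : (pathPlus t).Free H) (ht : 4 ≤ t)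
    (hv : ∀ x ∈ S, G.Adj x v) : S.card ≤ 3 * (t - 1) := by
  by_contra! hlt
  obtain ⟨X, l, hsearch, hcard⟩ :=
    exists_isSearchState (G := G) (B := S) (s := 3 * t - 2) (by omega)
  have hXS := hsearch.subset
  have hlen := length_add_one_lt_of_adj hG ht hsearch.nodup hsearch.isChain
    fun x hx => hv x (Finset.mem_sdiff.1 (hsearch.mem_stack x hx)).1
  have hlS : l.toFinset ⊆ S \ X := fun x hx => hsearch.mem_stack x (List.mem_toFinset.1 hx)
  have hrest : ((S \ X) \ l.toFinset).card + l.length + X.card = S.card := by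
    rw [← List.toFinset_card_of_nodup hsearch.nodup, Finset.card_sdiff_add_card_eq_card hlS,
      Finset.card_sdiff_add_card_eq_card hXS]
  have hX : t ≤ X.card := by omega
  by_cases hedge : ∃ x ∈ X, ∃ x' ∈ X, H.Adj x x'
  · obtain ⟨x, hx, x', hx', hxx'⟩ := hedge
    refine hH (h.pathPlus_isContained (by omega) hXS (Y := (S \ X) \ l.toFinset)
      (Finset.sdiff_subset.trans Finset.sdiff_subset)
      (Finset.disjoint_sdiff.mono_right Finset.sdiff_subset) hX (by omega)
      (fun x hx y hy => ?_) hx hx' hxx')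
    obtain ⟨hy, hyl⟩ := Finset.mem_sdiff.1 hy
    exact hsearch.not_adj x hx y hy (by simpa using hyl)
  · push Not at hedge
    obtain ⟨p, hp, hpc, hpX, hplen⟩ := (h.mono (H := G) hXS fun x hx y hy _ hxy =>
      hxy.resolve_right (hedge x hx y hy)).exists_isChain hX
    have := length_add_one_lt_of_adj hG ht hp hpc fun x hx => hv x (hXS (hpX x hx))
    omega

theorem IsLightMultipartite.two_mul_card_lt_card_neighbors_add
    (h : IsLightMultipartite (G ⊔ H) S π t) (hv : v ∈ S) :
    2 * S.card < 2 * {x ∈ S | G.Adj x v}.card + 2 * {x ∈ S | H.Adj x v}.card + t := by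
  have hsup := h.two_mul_card_lt_card_neighbors Finset.Subset.rfl hv fun x hx hne => h.adj hx hv hne
  have := Finset.card_union_le {x ∈ S | G.Adj x v} {x ∈ S | H.Adj x v}
  rw [← Finset.filter_or] at this
  simp only [sup_adj] at hsup
  omega

theorem IsLightMultipartite.not_adj_of_adj_of_adj (h : IsLightMultipartite (G ⊔ H) S π t)
    (hG : (pathPlus t).Free G) (hH : (pathPlus t).Free H) (ht : 4 ≤ t)
    (hS : 9 * (t - 1) < 2 * S.card) {x y z : V} (hx : x ∈ S) (hxy : G.Adj x y) (hyz : G.Adj y z) :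
    ¬G.Adj x z := by
  intro hxz
  obtain ⟨u, hu, hdeg⟩ : ∃ u ∈ S, {w ∈ S | G.Adj w u}.card + 1 < t := by
    by_contra! hdeg
    exact hG (pathPlus_isContained_of_card_le_degree (by omega) hdeg hx hxy hyz hxz)
  have hH_card : {w ∈ S | H.Adj w u}.card ≤ 3 * (t - 1) :=
    (h.mono (H := H ⊔ G) (Finset.filter_subset _ _) fun _ _ _ _ _ => Or.symm).card_le_of_dominating
      hH hG ht fun x hx => (Finset.mem_filter.1 hx).2
  have := h.two_mul_card_lt_card_neighbors_add hu
  omega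

theorem IsLightMultipartite.two_mul_card_neighbors_le (h : IsLightMultipartite (G ⊔ H) S π t)
    (hG : (pathPlus t).Free G) (hH : (pathPlus t).Free H) (ht : 4 ≤ t)
    (hS : 9 * (t - 1) < 2 * S.card) : 2 * {x ∈ S | G.Adj x v}.card ≤ 3 * (t - 1) := by
  refine (h.mono (H := H) (Finset.filter_subset _ _)
    fun x hx y hy _ hxy => ?_).two_mul_card_le hH ht
  obtain ⟨hx, hxv⟩ := Finset.mem_filter.1 hx
  obtain ⟨-, hyv⟩ := Finset.mem_filter.1 hy
  exact hxy.resolve_left fun hxy => h.not_adj_of_adj_of_adj hG hH ht hS hx hxy hyv hxv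

theorem IsLightMultipartite.two_mul_card_le_of_sup (h : IsLightMultipartite (G ⊔ H) S π t)
    (hG : (pathPlus t).Free G) (hH : (pathPlus t).Free H) (ht : 4 ≤ t) :
    2 * S.card ≤ 9 * (t - 1) := by
  by_contra! hlt
  obtain ⟨v, hv⟩ : S.Nonempty := Finset.card_pos.1 (by omega)
  have := h.two_mul_card_neighbors_le (v := v) hG hH ht hlt
  have := (sup_comm G H ▸ h).two_mul_card_neighbors_le (v := v) hH hG ht hlt
  have := h.two_mul_card_lt_card_neighbors_add hv
  omega

end TwoColorMultipartite

section Ramsey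

variable {V : Type*} {G H : SimpleGraph V} {X : Finset V} {l m p p₁ p₂ q : List V}
  {e f g v w x y z : V} {j : ℕ}

theorem IsPathPlus.of_pairwise (hl : l.Pairwise G.Adj) (hlen : 3 ≤ l.length) : IsPathPlus G l := by
  obtain rfl | ⟨m, v, rfl⟩ := List.eq_nil_or_concat' l
  · simp at hlen
  obtain ⟨hm, -, hv⟩ := List.pairwise_append.1 hl
  exact .of_isChain (hm.imp Adj.ne) hm.isChain (fun x hx => hv x hx v (by simp))
    (by simpa using hlen)

/-- A longest path with a triangle at its end. -/
structure IsLongestPathPlus (G : SimpleGraph V) (l : List V) : Prop where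
  isPathPlus : IsPathPlus G l
  length_le {l' : List V} : IsPathPlus G l' → l'.length ≤ l.length

theorem IsLongestPathPlus.compl_adj_tip (h : IsLongestPathPlus G (e :: l)) (hw : w ∉ e :: l) :
    Gᶜ.Adj w e := by
  refine (compl_adj _ _ _).2 ⟨fun hwe => hw (by simp [hwe]), fun hadj => ?_⟩
  simpa using h.length_le (h.isPathPlus.cons hw hadj)

theorem IsLongestPathPlus.compl_adj_or_compl_adj (h : IsLongestPathPlus G (m ++ [x, y, z]))
    (hw : w ∉ m ++ [x, y, z]) : Gᶜ.Adj w y ∨ Gᶜ.Adj w z := by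
  by_contra! hadj
  have hwy : w ≠ y := by rintro rfl; simp at hw
  have hwz : w ≠ z := by rintro rfl; simp at hw
  simp only [compl_adj, hwy, hwz, ne_eq, not_false_eq_true, true_and, not_not] at hadj
  have hchain : (m ++ [x] ++ [y] ++ [z]).IsChain G.Adj := by simpa using h.isPathPlus.isChain
  have hyz : G.Adj y z := by simpa using (List.isChain_append.1 hchain).2.2
  have htriangle : IsPathPlus G (y :: [z, w]) := .triangle hyz hadj.2.symm hadj.1.symm
  have hnodup : (m ++ [x] ++ y :: [z, w]).Nodup := by
    have : (m ++ [x] ++ y :: [z, w]) = (m ++ [x, y, z]) ++ [w] := by simp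
    rw [this]
    exact h.isPathPlus.nodup.append (by simp) (by simpa using hw)
  have := h.length_le (htriangle.append hnodup (List.isChain_append.1 hchain).1)
  simp at this

theorem IsLongestPathPlus.not_isChain (h : IsLongestPathPlus G (p₁ ++ f :: g :: p₂))
    (hp₂ : 2 ≤ p₂.length) (hm : m ≠ []) (hnodup : m.Nodup)
    (hdisj : ∀ w ∈ m, w ∉ p₁ ++ f :: g :: p₂) : ¬ (f :: (m ++ [g])).IsChain G.Adj := by
  intro hchain
  have htail : IsPathPlus G (g :: p₂) :=
    IsPathPlus.of_append (m := p₁ ++ [f]) (by simpa using h.isPathPlus) (by simpa using hp₂)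
  have hperm : (p₁ ++ f :: m ++ g :: p₂).Perm (m ++ (p₁ ++ f :: g :: p₂)) := by
    have := (List.perm_append_comm (l₁ := p₁ ++ [f]) (l₂ := m)).append_right (g :: p₂)
    simpa using this
  have hinsert : (p₁ ++ f :: m ++ [g]).IsChain G.Adj := by
    rw [List.append_assoc]
    exact List.isChain_split.2 ⟨(List.isChain_split.1 h.isPathPlus.isChain).1, hchain⟩
  have := h.length_le (htail.append
    (hperm.nodup_iff.2 (hnodup.append h.isPathPlus.nodup fun w hw => hdisj w hw)) hinsert)
  rw [hperm.length_eq, List.length_append] at this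
  have := List.length_pos_of_ne_nil hm
  omega

/-- Every vertex of `X` is joined to `f` or to `g`, and two vertices of `X` that have neither `f`
nor `g` as a common neighbour are joined to each other. A path with its tip in `X` can thus be
extended by two vertices with the help of `f` or `g`. -/
structure IsLinked (H : SimpleGraph V) (X : Finset V) (f g : V) : Prop where
  adj_or_adj : ∀ w ∈ X, H.Adj w f ∨ H.Adj w g
  adj_of_ne : ∀ w ∈ X, ∀ w' ∈ X, w ≠ w' →
    (H.Adj w f ∧ H.Adj w' f) ∨ (H.Adj w g ∧ H.Adj w' g) ∨ H.Adj w w'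

theorem IsLinked.symm (h : IsLinked H X f g) : IsLinked H X g f :=
  ⟨fun w hw => (h.adj_or_adj w hw).symm,
    fun w hw w' hw' hne => or_left_comm.1 (h.adj_of_ne w hw w' hw' hne)⟩

theorem IsLinked.mono {Y : Finset V} (h : IsLinked H X f g) (hY : Y ⊆ X) : IsLinked H Y f g :=
  ⟨fun w hw => h.adj_or_adj w (hY hw), fun w hw w' hw' => h.adj_of_ne w (hY hw) w' (hY hw')⟩

theorem IsLongestPathPlus.isLinked (h : IsLongestPathPlus G (p₁ ++ f :: g :: p₂))
    (hp₂ : 2 ≤ p₂.length) (hX : ∀ w ∈ X, w ∉ p₁ ++ f :: g :: p₂) : IsLinked Gᶜ X f g := by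
  have hadj {w v : V} (hw : w ∈ X) (hv : v ∈ p₁ ++ f :: g :: p₂) : Gᶜ.Adj w v ↔ ¬ G.Adj w v := by
    rw [compl_adj, and_iff_right]
    rintro rfl
    exact hX w hw hv
  have hf {w : V} (hw : w ∈ X) : Gᶜ.Adj w f ↔ ¬ G.Adj w f := hadj hw (by simp)
  have hg {w : V} (hw : w ∈ X) : Gᶜ.Adj w g ↔ ¬ G.Adj w g := hadj hw (by simp)
  have hsingle : ∀ w ∈ X, ¬ (G.Adj w f ∧ G.Adj w g) := fun w hw hwfg =>
    h.not_isChain (m := [w]) hp₂ (by simp) (by simp) (by simpa using hX w hw)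
      (by simp [hwfg.1.symm, hwfg.2])
  have hpair : ∀ w ∈ X, ∀ w' ∈ X, w ≠ w' → ¬ (G.Adj w f ∧ G.Adj w w' ∧ G.Adj w' g) :=
    fun w hw w' hw' hne ⟨hwf, hww, hwg⟩ =>
      h.not_isChain (m := [w, w']) hp₂ (by simp) (by simpa using hne)
        (List.forall_mem_cons.2 ⟨hX w hw, by simpa using hX w' hw'⟩) (by simp [hwf.symm, hww, hwg])
  refine ⟨fun w hw => ?_, fun w hw w' hw' hne => ?_⟩
  · rw [hf hw, hg hw]
    exact not_and_or.1 (hsingle w hw)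
  · have h₁ := hpair w hw w' hw' hne
    have h₂ := hpair w' hw' w hw hne.symm
    have h₃ := hsingle w hw
    have h₄ := hsingle w' hw'
    rw [G.adj_comm w' w] at h₂
    rw [hf hw, hg hw, hf hw', hg hw', compl_adj]
    tauto

/-- A path with a triangle at its end that meets `X` only in its tip `w`, together with a supply
`q` of further vertices that can be used for extending it. -/
structure IsZigzagState (H : SimpleGraph V) (X : Finset V) (q l : List V) (w : V) : Prop where
  isPathPlus : IsPathPlus H (w :: l)
  tip_mem : w ∈ X
  notMem_of_mem : ∀ x ∈ X, x ∉ l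
  supply_notMem : ∀ y ∈ q, y ∉ X ∧ y ∉ l
  supply_nodup : q.Nodup

theorem IsZigzagState.cons (h : IsZigzagState H X q l w) (hx : x ∈ X) (hxw : x ≠ w)
    (hadj : H.Adj x w) : IsZigzagState H (X.erase w) q (w :: l) x where
  isPathPlus := h.isPathPlus.cons (by simpa [hxw] using h.notMem_of_mem x hx) hadj
  tip_mem := Finset.mem_erase.2 ⟨hxw, hx⟩
  notMem_of_mem y hy := by
    simpa [(Finset.mem_erase.1 hy).1] using h.notMem_of_mem y (Finset.mem_of_mem_erase hy)
  supply_notMem y hy := by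
    obtain ⟨hyX, hyl⟩ := h.supply_notMem y hy
    exact ⟨fun hy' => hyX (Finset.mem_of_mem_erase hy'),
      by simpa [hyl] using fun hyw : y = w => hyX (hyw ▸ h.tip_mem)⟩
  supply_nodup := h.supply_nodup

theorem IsZigzagState.cons_cons (h : IsZigzagState H X (y :: q) l w) (hx : x ∈ X) (hxw : x ≠ w)
    (hxy : H.Adj x y) (hwy : H.Adj w y) : IsZigzagState H (X.erase w) q (y :: w :: l) x := by
  obtain ⟨hyX, hyl⟩ := h.supply_notMem y List.mem_cons_self
  have hX {v : V} (hv : v ∈ X.erase w) : v ∉ y :: w :: l := by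
    obtain ⟨hvw, hv⟩ := Finset.mem_erase.1 hv
    simpa [hvw, h.notMem_of_mem v hv] using fun hvy : v = y => hyX (hvy ▸ hv)
  have hx' : x ∈ X.erase w := Finset.mem_erase.2 ⟨hxw, hx⟩
  refine ⟨(h.isPathPlus.cons (by simpa [hyl] using hwy.ne') hwy.symm).cons (hX hx') hxy, hx',
    fun _ => hX, fun v hv => ?_, h.supply_nodup.of_cons⟩
  have hvy : v ≠ y := fun hvy => (List.nodup_cons.1 h.supply_nodup).1 (hvy ▸ hv)
  obtain ⟨hvX, hvl⟩ := h.supply_notMem v (List.mem_cons_of_mem _ hv)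
  exact ⟨fun hv' => hvX (Finset.mem_of_mem_erase hv'),
    by simpa [hvy, hvl] using fun hvw : v = w => hvX (hvw ▸ h.tip_mem)⟩

theorem IsZigzagState.of_supply_subset (h : IsZigzagState H X q l w) (hp : p ⊆ q)
    (hnodup : p.Nodup) : IsZigzagState H X p l w :=
  { h with
    supply_notMem := fun y hy => h.supply_notMem y (hp hy)
    supply_nodup := hnodup }

theorem IsZigzagState.exists_step_of_adj (h : IsZigzagState H X (f :: g :: q) l w)
    (hfg : IsLinked H X f g) (hwf : H.Adj w f) (hX : 3 ≤ X.card) :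
    ∃ X' ⊆ X, ∃ l' w', IsZigzagState H X' q l' w' ∧
      l.length + 2 ≤ l'.length ∧ X.card ≤ X'.card + 2 := by
  obtain ⟨a, ha, b, hb, hab⟩ := Finset.one_lt_card.1
    (show 1 < (X.erase w).card by rw [Finset.card_erase_of_mem h.tip_mem]; omega)
  have hcard := Finset.card_erase_add_one h.tip_mem
  have hsupply : IsZigzagState H X (f :: q) l w ∧ IsZigzagState H X (g :: q) l w := by
    have hnodup := h.supply_nodup
    simp only [List.nodup_cons, List.mem_cons, not_or] at hnodup
    exact ⟨h.of_supply_subset (by simp) (List.nodup_cons.2 ⟨hnodup.1.2, hnodup.2.2⟩),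
      h.of_supply_subset (by simp) (List.nodup_cons.2 hnodup.2)⟩
  have hcommon {x y : V} (hx : x ∈ X.erase w) (hy : IsZigzagState H X (y :: q) l w)
      (hxy : H.Adj x y) (hwy : H.Adj w y) : ∃ X' ⊆ X, ∃ l' w', IsZigzagState H X' q l' w' ∧
        l.length + 2 ≤ l'.length ∧ X.card ≤ X'.card + 2 := by
    obtain ⟨hxw, hx⟩ := Finset.mem_erase.1 hx
    exact ⟨_, Finset.erase_subset _ _, _, x, hy.cons_cons hx hxw hxy hwy, by simp, by omega⟩
  by_cases haf : H.Adj a f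
  · exact hcommon ha hsupply.1 haf hwf
  by_cases hbf : H.Adj b f
  · exact hcommon hb hsupply.1 hbf hwf
  obtain ⟨haw, ha'⟩ := Finset.mem_erase.1 ha
  have hag := (hfg.adj_or_adj a ha').resolve_left haf
  have hbg := (hfg.adj_or_adj b (Finset.mem_of_mem_erase hb)).resolve_left hbf
  by_cases hwg : H.Adj w g
  · exact hcommon ha hsupply.2 hag hwg
  have hadj : H.Adj a w := by
    simpa [haf, hwg] using hfg.adj_of_ne a ha' w h.tip_mem haw
  refine ⟨_, (Finset.erase_subset _ _).trans (Finset.erase_subset _ _), _, b,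
    (hsupply.2.cons ha' haw hadj).cons_cons hb hab.symm hbg hag, by simp, ?_⟩
  have := Finset.card_erase_add_one ha
  omega

theorem IsZigzagState.exists_step (h : IsZigzagState H X (f :: g :: q) l w)
    (hfg : IsLinked H X f g) (hX : 3 ≤ X.card) :
    ∃ X' ⊆ X, ∃ l' w', IsZigzagState H X' q l' w' ∧
      l.length + 2 ≤ l'.length ∧ X.card ≤ X'.card + 2 := by
  rcases hfg.adj_or_adj w h.tip_mem with hwf | hwg
  · exact h.exists_step_of_adj hfg hwf hX
  · have hperm := List.Perm.swap f g q
    have h' := h.of_supply_subset hperm.subset (hperm.nodup_iff.2 h.supply_nodup)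
    exact h'.exists_step_of_adj hfg.symm hwg hX

theorem IsZigzagState.exists_isPathPlus : ∀ {X : Finset V} {q l : List V} {w : V},
    IsZigzagState H X q l w → q.IsChain (IsLinked H X) → q.length < X.card →
      ∃ l', IsPathPlus H l' ∧ l.length + q.length ≤ l'.length
  | _, [], _, _, h, _, _ => ⟨_, h.isPathPlus, by simp⟩
  | _, [_], _, _, h, _, _ => ⟨_, h.isPathPlus, by simp⟩
  | X, f :: g :: q, _, _, h, hq, hX => by
    simp only [List.length_cons] at hX
    obtain ⟨hfg, hq⟩ := List.isChain_cons_cons.1 hq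
    obtain ⟨X', hX', l', w', h', hl, hcard⟩ := h.exists_step hfg (by omega)
    obtain ⟨k, hk, hlk⟩ := h'.exists_isPathPlus (hq.tail.imp fun _ _ h => h.mono hX') (by omega)
    exact ⟨k, hk, by simp only [List.length_cons]; omega⟩

theorem IsLongestPathPlus.exists_compl_adj (h : IsLongestPathPlus G l) (hX : l.length < X.card) :
    ∃ a ∈ X, ∃ b ∈ X, Gᶜ.Adj a b := by
  by_contra! hcon
  have hpair : X.toList.Pairwise G.Adj :=
    X.nodup_toList.imp_of_mem fun ha hb hab => not_not.1 fun hadj =>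
      hcon _ (Finset.mem_toList.1 ha) _ (Finset.mem_toList.1 hb) ((compl_adj _ _ _).2 ⟨hab, hadj⟩)
  have hlen := h.isPathPlus.three_le_length
  have := h.length_le (.of_pairwise hpair (by rw [Finset.length_toList]; omega))
  rw [Finset.length_toList] at this
  omega

theorem IsLongestPathPlus.exists_common_neighbor (h : IsLongestPathPlus G (m ++ [x, y, z]))
    (hX : ∀ w ∈ X, w ∉ m ++ [x, y, z]) (hcard : 2 < X.card) :
    ∃ u ∈ [y, z], ∃ a ∈ X, ∃ b ∈ X, a ≠ b ∧ Gᶜ.Adj a u ∧ Gᶜ.Adj b u := by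
  have (w : V) : ∃ u, w ∈ X → u ∈ [y, z] ∧ Gᶜ.Adj w u := by
    by_cases hw : w ∈ X
    · rcases h.compl_adj_or_compl_adj (hX w hw) with hwy | hwz
      exacts [⟨y, fun _ => ⟨by simp, hwy⟩⟩, ⟨z, fun _ => ⟨by simp, hwz⟩⟩]
    · exact ⟨w, fun hw' => absurd hw' hw⟩
  choose u hu using this
  obtain ⟨a, ha, b, hb, hab, hu'⟩ := Finset.exists_ne_map_eq_of_card_lt_of_maps_to
    (lt_of_le_of_lt Finset.card_le_two hcard) (t := {y, z}) (f := u)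
    (fun w hw => by simpa using (hu w hw).1)
  exact ⟨u a, (hu a ha).1, a, ha, b, hb, hab, (hu a ha).2, hu' ▸ (hu b hb).2⟩

theorem IsLongestPathPlus.exists_isPathPlus_compl_cons (h : IsLongestPathPlus G (e :: l))
    (hX : ∀ w ∈ X, w ∉ e :: l) (hcard : (e :: l).length < X.card) :
    ∃ a ∈ X, ∃ b ∈ X, a ≠ b ∧ ∀ w ∈ X, w ≠ a → w ≠ b → IsPathPlus Gᶜ [w, e, a, b] := by
  obtain ⟨a, ha, b, hb, hab⟩ := h.exists_compl_adj hcard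
  have htip {w : V} (hw : w ∈ X) : Gᶜ.Adj w e := h.compl_adj_tip (hX w hw)
  refine ⟨a, ha, b, hb, hab.ne, fun w hw hwa hwb => ?_⟩
  exact (IsPathPlus.triangle (htip ha).symm hab (htip hb).symm).cons
    (by simp [hwa, hwb, (htip hw).ne]) (htip hw)

theorem IsLongestPathPlus.exists_isZigzagState (h : IsLongestPathPlus G (e :: (m ++ [x, y, z])))
    (hX : ∀ w ∈ X, w ∉ e :: (m ++ [x, y, z]))
    (hcard : (e :: (m ++ [x, y, z])).length < X.card) :
    ∃ X' ⊆ X, ∃ l w, IsZigzagState Gᶜ X' (m ++ [x]) l w ∧ l.length = 5 ∧ X.card ≤ X'.card + 3 := by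
  obtain ⟨a, ha, b, hb, hab, hpath⟩ := h.exists_isPathPlus_compl_cons hX hcard
  obtain ⟨A, hA⟩ : ∃ A, A = (X.erase a).erase b := ⟨_, rfl⟩
  have hA_mem {w : V} : w ∈ A ↔ w ≠ b ∧ w ≠ a ∧ w ∈ X := by simp [hA]
  have hA_card : A.card + 2 = X.card := by
    rw [hA, ← Finset.card_erase_add_one ha,
      ← Finset.card_erase_add_one (Finset.mem_erase.2 ⟨hab.symm, hb⟩ : b ∈ X.erase a)]
  obtain ⟨u, hu, v, hv, w, hw, hvw, hvu, hwu⟩ :=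
    IsLongestPathPlus.exists_common_neighbor (m := e :: m) h (X := A)
      (fun w hw => hX w (hA_mem.1 hw).2.2) (by simp at hcard; omega)
  have hnodup : (e :: u :: (m ++ [x])).Nodup := by
    have := h.isPathPlus.nodup
    rcases List.mem_pair.1 hu with rfl | rfl <;> grind
  have hsubset : e :: u :: (m ++ [x]) ⊆ e :: (m ++ [x, y, z]) := by
    rcases List.mem_pair.1 hu with rfl | rfl <;> simp
  have hdisj {c s : V} (hc : c ∈ X) (hs : s ∈ e :: u :: (m ++ [x])) : s ≠ c :=
    fun hsc => hX c hc (hsc ▸ hsubset hs)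
  have hstate : IsZigzagState Gᶜ A (u :: (m ++ [x])) [e, a, b] v := by
    refine ⟨hpath v (hA_mem.1 hv).2.2 (hA_mem.1 hv).2.1 (hA_mem.1 hv).1, hv, fun w hw => ?_,
      fun s hs => ⟨fun hs' => hdisj (hA_mem.1 hs').2.2 (List.mem_cons_of_mem _ hs) rfl, ?_⟩,
      hnodup.of_cons⟩
    · obtain ⟨hwb, hwa, hwX⟩ := hA_mem.1 hw
      simpa [hwa, hwb] using (hdisj hwX List.mem_cons_self).symm
    · have hse : s ≠ e := fun hse => (List.nodup_cons.1 hnodup).1 (hse ▸ hs)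
      simp [hse, hdisj ha (List.mem_cons_of_mem _ hs), hdisj hb (List.mem_cons_of_mem _ hs)]
  refine ⟨_, (Finset.erase_subset _ _).trans fun w hw => (hA_mem.1 hw).2.2, _, w,
    hstate.cons_cons hw hvw.symm hwu hvu, rfl, ?_⟩
  have := Finset.card_erase_add_one hv
  omega

theorem IsLongestPathPlus.isChain_isLinked (h : IsLongestPathPlus G (e :: (q ++ [y, z])))
    (hX : ∀ w ∈ X, w ∉ e :: (q ++ [y, z])) : q.IsChain (IsLinked Gᶜ X) := by
  refine List.isChain_iff_forall_rel_of_append_cons_cons.2 fun {f g p₁ p₂} hq => ?_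
  have hl : e :: (q ++ [y, z]) = (e :: p₁) ++ f :: g :: (p₂ ++ [y, z]) := by simp [hq]
  rw [hl] at h hX
  exact h.isLinked (by simp) hX

theorem IsLongestPathPlus.exists_isPathPlus_compl (h : IsLongestPathPlus G l)
    (hX : ∀ w ∈ X, w ∉ l) (hcard : l.length < X.card) :
    ∃ l', IsPathPlus Gᶜ l' ∧ l.length < l'.length := by
  obtain ⟨m, x, y, z, rfl, -⟩ := h.isPathPlus.exists_eq_append
  rcases m with _ | ⟨e, m⟩
  · obtain ⟨a, -, b, -, -, hpath⟩ := h.exists_isPathPlus_compl_cons hX hcard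
    obtain ⟨w, hw, hwab⟩ := Finset.exists_mem_notMem_of_card_lt_card
      (lt_of_le_of_lt (Finset.card_le_two (a := a) (b := b)) (by simp at hcard; omega) :
        ({a, b} : Finset V).card < X.card)
    simp only [Finset.mem_insert, Finset.mem_singleton, not_or] at hwab
    exact ⟨_, hpath w hw hwab.1 hwab.2, by simp⟩
  · obtain ⟨X', hX', k, w, hstate, hk, hX'card⟩ := h.exists_isZigzagState hX hcard
    have hchain : (m ++ [x]).IsChain (IsLinked Gᶜ X) :=
      IsLongestPathPlus.isChain_isLinked (e := e) (y := y) (z := z) (by simpa using h)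
        (by simpa using hX)
    simp only [List.length_append, List.length_cons, List.length_nil] at hcard ⊢
    obtain ⟨l', hl', hlen⟩ := hstate.exists_isPathPlus (hchain.imp fun _ _ h => h.mono hX')
      (by simp; omega)
    exact ⟨l', hl', by simp at hlen; omega⟩

theorem exists_isPathPlus_or_compl_of_card_neighbors (hX : 2 < X.card)
    (hv : ∀ x ∈ X, G.Adj x v) :
    ∃ l : List V, (IsPathPlus G l ∨ IsPathPlus Gᶜ l) ∧ 3 ≤ l.length := by
  obtain ⟨a, ha, b, hb, d, hd, hab, had, hbd⟩ := Finset.two_lt_card.1 hX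
  by_cases hadj : ∃ x ∈ X, ∃ y ∈ X, G.Adj x y
  · obtain ⟨x, hx, y, hy, hxy⟩ := hadj
    exact ⟨[x, y, v], .inl (.triangle hxy (hv y hy) (hv x hx)), le_rfl⟩
  · push Not at hadj
    refine ⟨[a, b, d], .inr (.triangle ?_ ?_ ?_), le_rfl⟩
    exacts [(compl_adj _ _ _).2 ⟨hab, hadj a ha b hb⟩, (compl_adj _ _ _).2 ⟨hbd, hadj b hb d hd⟩,
      (compl_adj _ _ _).2 ⟨had, hadj a ha d hd⟩]

theorem exists_isPathPlus_or_compl_three [Fintype V] (G : SimpleGraph V)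
    (hV : 6 ≤ Fintype.card V) :
    ∃ l : List V, (IsPathPlus G l ∨ IsPathPlus Gᶜ l) ∧ 3 ≤ l.length := by
  obtain ⟨v⟩ : Nonempty V := Fintype.card_pos_iff.1 (by omega)
  have hcard := G.degree_compl v
  by_cases hG : 2 < (G.neighborFinset v).card
  · exact exists_isPathPlus_or_compl_of_card_neighbors (v := v) hG fun x hx => by
      simpa [G.adj_comm] using hx
  · obtain ⟨l, hl, hlen⟩ := exists_isPathPlus_or_compl_of_card_neighbors (G := Gᶜ) (v := v)
      (X := Gᶜ.neighborFinset v) (by rw [card_neighborFinset_eq_degree] at hG ⊢; omega)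
      fun x hx => by simpa [Gᶜ.adj_comm, -compl_adj] using hx
    exact ⟨l, by simpa [or_comm] using hl, hlen⟩

theorem exists_isPathPlus_or_compl [Fintype V] (G : SimpleGraph V) (hV : 6 ≤ Fintype.card V)
    (hj : 3 ≤ j) (hjV : 2 * j ≤ Fintype.card V + 1) :
    ∃ l : List V, (IsPathPlus G l ∨ IsPathPlus Gᶜ l) ∧ j ≤ l.length := by
  induction j, hj using Nat.le_induction with
  | base => exact exists_isPathPlus_or_compl_three G hV
  | succ j _ ih =>
    by_contra! hcon
    obtain ⟨l, hl, hjl⟩ := ih (by omega)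
    have hlj : l.length = j := by have := hcon l hl; omega
    have hX : l.length < l.toFinsetᶜ.card := by
      have := l.toFinset_card_le
      rw [Finset.card_compl]
      omega
    rcases hl with hl | hl
    · have hlongest : IsLongestPathPlus G l := ⟨hl, fun h => by have := hcon _ (.inl h); omega⟩
      obtain ⟨k, hk, hlk⟩ := hlongest.exists_isPathPlus_compl (by simp) hX
      have := hcon k (.inr hk)
      omega
    · have hlongest : IsLongestPathPlus Gᶜ l := ⟨hl, fun h => by have := hcon _ (.inr h); omega⟩
      obtain ⟨k, hk, hlk⟩ := hlongest.exists_isPathPlus_compl (by simp) hX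
      have := hcon k (.inl (by rwa [compl_compl] at hk))
      omega

end Ramsey

section GallaiPartition

universe u

variable {V : Type u} {W C ι : Type*} {c : Sym2 V → C} {q q₁ q₂ q₃ : C} {v x x' y : V}

theorem not_hasRainbowTriangle_comp_map (hc : ¬ HasRainbowTriangle c) {f : W → V}
    (hf : f.Injective) : ¬ HasRainbowTriangle (c ∘ Sym2.map f) :=
  fun ⟨x, y, z, hxy, hxz, hyz, h⟩ => hc ⟨f x, f y, f z, hf.ne hxy, hf.ne hxz, hf.ne hyz, h⟩

theorem colorGraph_comp_map (c : Sym2 V → C) (q : C) {f : W → V} (hf : f.Injective) :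
    colorGraph (c ∘ Sym2.map f) q = (colorGraph c q).comap f := by
  ext x y
  simp [hf.ne_iff]

theorem color_eq_of_color_ne (hc : ¬ HasRainbowTriangle c) (hvx : v ≠ x) (hvy : v ≠ y)
    (hxy : x ≠ y) (h₁ : c s(v, x) ≠ c s(v, y)) (h₂ : c s(v, x) ≠ c s(x, y)) :
    c s(v, y) = c s(x, y) :=
  by_contra fun h₃ => hc ⟨v, x, y, hvx, hvy, hxy, h₁, h₂, h₃⟩

theorem color_eq_of_reachable (hc : ¬ HasRainbowTriangle c)
    (hx : (colorGraph c q).Reachable x x') (hy : ¬ (colorGraph c q).Reachable x y) :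
    c s(x, y) = c s(x', y) := by
  obtain ⟨p⟩ := hx
  induction p with
  | nil => rfl
  | @cons x z x' hxz _ ih =>
    have hzy : ¬ (colorGraph c q).Reachable z y := fun h => hy (hxz.reachable.trans h)
    have hne {w : V} (hw : ¬ (colorGraph c q).Reachable w y) : w ≠ y ∧ c s(w, y) ≠ q := by
      have hwy : w ≠ y := by rintro rfl; exact hw .rfl
      exact ⟨hwy, fun hq => hw (colorGraph_adj.2 ⟨hq, hwy⟩).reachable⟩
    obtain ⟨hq, hxz'⟩ := colorGraph_adj.1 hxz
    rw [← ih hzy]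
    exact color_eq_of_color_ne hc hxz' (hne hy).1 (hne hzy).1 (hq.trans_ne (hne hy).2.symm)
      (hq.trans_ne (hne hzy).2.symm)

theorem color_eq_of_reachable_induce (hc : ¬ HasRainbowTriangle c) {s : Set V} {x x' y : s}
    (hx : ((colorGraph c q).induce s).Reachable x x')
    (hy : ¬ ((colorGraph c q).induce s).Reachable x y) :
    c s((x : V), (y : V)) = c s((x' : V), (y : V)) := by
  have hinj : Function.Injective (Subtype.val : s → V) := Subtype.val_injective
  have hgraph : colorGraph (c ∘ Sym2.map Subtype.val) q = (colorGraph c q).induce s :=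
    colorGraph_comp_map c q hinj
  rw [← hgraph] at hx hy
  exact color_eq_of_reachable (c := c ∘ Sym2.map Subtype.val)
    (not_hasRainbowTriangle_comp_map hc hinj) hx hy

theorem exists_reachable_induce_compl_adj {G : SimpleGraph V} (hG : G.Preconnected)
    (y : ({v}ᶜ : Set V)) : ∃ y' : ({v}ᶜ : Set V), (G.induce {v}ᶜ).Reachable y y' ∧ G.Adj v y' := by
  obtain ⟨p, hp⟩ := (hG y v).exists_isPath
  have hnil : ¬ p.Nil := Walk.not_nil_of_ne y.2
  have hv : ∀ x ∈ p.dropLast.support, x ∈ ({v}ᶜ : Set V) := by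
    rintro _ hx rfl
    have hnodup := hp.support_nodup
    rw [← Walk.support_dropLast_concat hnil] at hnodup
    exact (List.nodup_append.1 hnodup).2.2 _ hx _ (by simp) rfl
  exact ⟨_, ⟨p.dropLast.induce _ hv⟩, (Walk.adj_penultimate hnil).symm⟩

theorem color_eq_of_not_reachable_induce_compl (hc : ¬ HasRainbowTriangle c)
    (hq : (colorGraph c q).Preconnected) {x y : ({v}ᶜ : Set V)} (hvx : c s(v, x) ≠ q)
    (hxy : ¬ ((colorGraph c q).induce {v}ᶜ).Reachable x y) : c s((x : V), (y : V)) = c s(v, x) := by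
  obtain ⟨y', hyy', hvy'⟩ := exists_reachable_induce_compl_adj hq y
  obtain ⟨hvy', -⟩ := colorGraph_adj.1 hvy'
  have hxy' : ¬ ((colorGraph c q).induce {v}ᶜ).Reachable x y' := fun h => hxy (h.trans hyy'.symm)
  have hne : (x : V) ≠ y' := fun h => hxy' (Subtype.ext h ▸ .rfl)
  have hcolor := color_eq_of_reachable_induce hc hyy' fun h => hxy h.symm
  have hq' : c s((x : V), (y' : V)) ≠ q := fun h =>
    hxy' (Adj.reachable (G := (colorGraph c q).induce {v}ᶜ) (colorGraph_adj.2 ⟨h, hne⟩))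
  rw [Sym2.eq_swap, hcolor, Sym2.eq_swap]
  by_contra hcon
  have := color_eq_of_color_ne hc (Ne.symm x.2) (Ne.symm y'.2) hne (by rwa [hvy']) (Ne.symm hcon)
  exact hq' (this.symm.trans hvy')

theorem preconnected_induce_compl (hc : ¬ HasRainbowTriangle c)
    (hq : (colorGraph c q₁).Preconnected) (h₁₂ : q₁ ≠ q₂) (h₁₃ : q₁ ≠ q₃) (h₂₃ : q₂ ≠ q₃)
    (h₂ : (colorGraph c q₂).Adj v x) (h₃ : (colorGraph c q₃).Adj v y) :
    ((colorGraph c q₁).induce {v}ᶜ).Preconnected := by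
  obtain ⟨hcx, hvx⟩ := colorGraph_adj.1 h₂
  obtain ⟨hcy, hvy⟩ := colorGraph_adj.1 h₃
  lift x to ({v}ᶜ : Set V) using hvx.symm
  lift y to ({v}ᶜ : Set V) using hvy.symm
  have hx {z : ({v}ᶜ : Set V)} := color_eq_of_not_reachable_induce_compl hc hq (x := x) (y := z)
    (by rw [hcx]; exact h₁₂.symm)
  have hy {z : ({v}ᶜ : Set V)} := color_eq_of_not_reachable_induce_compl hc hq (x := y) (y := z)
    (by rw [hcy]; exact h₁₃.symm)
  have hxy : ((colorGraph c q₁).induce {v}ᶜ).Reachable x y := by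
    by_contra hcon
    have := (hx hcon).symm.trans (Sym2.eq_swap ▸ hy fun h => hcon h.symm)
    exact h₂₃ (hcx.symm.trans (this.trans hcy))
  have hxz (z) : ((colorGraph c q₁).induce {v}ᶜ).Reachable x z := by
    by_contra hcon
    have := color_eq_of_reachable_induce hc hxy hcon
    rw [hx hcon, hy fun h => hcon (hxy.trans h), hcx, hcy] at this
    exact h₂₃ this
  exact fun z w => (hxz z).symm.trans (hxz w)

theorem not_preconnected_of_three_colors [Finite V] [Nontrivial V] (hc : ¬ HasRainbowTriangle c)
    (h₁₂ : q₁ ≠ q₂) (h₁₃ : q₁ ≠ q₃) (h₂₃ : q₂ ≠ q₃) (h₁ : (colorGraph c q₁).Preconnected)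
    (h₂ : (colorGraph c q₂).Preconnected) : ¬ (colorGraph c q₃).Preconnected := by
  intro h₃
  induction hn : Nat.card V using Nat.strong_induction_on generalizing V with
  | _ n ih =>
    obtain ⟨v⟩ := (inferInstance : Nonempty V)
    obtain ⟨x₁, hx₁⟩ := h₁.exists_adj_of_nontrivial v
    obtain ⟨x₂, hx₂⟩ := h₂.exists_adj_of_nontrivial v
    obtain ⟨x₃, hx₃⟩ := h₃.exists_adj_of_nontrivial v
    have hne : x₁ ≠ x₂ := by
      rintro rfl
      exact h₁₂ ((colorGraph_adj.1 hx₁).1.symm.trans (colorGraph_adj.1 hx₂).1)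
    have : Nontrivial ({v}ᶜ : Set V) :=
      ⟨⟨x₁, hx₁.ne'⟩, ⟨x₂, hx₂.ne'⟩, fun h => hne (congrArg Subtype.val h)⟩
    have hinj : Function.Injective (Subtype.val : ({v}ᶜ : Set V) → V) := Subtype.val_injective
    have hcard : Nat.card ({v}ᶜ : Set V) < n := by
      rw [← hn]
      exact Finite.card_subtype_lt (x := v) (by simp)
    refine ih _ hcard (c := c ∘ Sym2.map Subtype.val) (not_hasRainbowTriangle_comp_map hc hinj)
      ?_ ?_ ?_ rfl <;> rw [colorGraph_comp_map c _ hinj]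
    · exact preconnected_induce_compl hc h₁ h₁₂ h₁₃ h₂₃ hx₂ hx₃
    · exact preconnected_induce_compl hc h₂ h₁₂.symm h₂₃ h₁₃ hx₁ hx₃
    · exact preconnected_induce_compl hc h₃ h₁₃.symm h₂₃.symm h₁₂ hx₁ hx₂

/-- A Gallai partition of `a`: the fibres of `π` split `a` into at least two parts such that only
the colours `r` and `b` occur between different parts, and all edges between two given parts have
the same colour. -/
structure IsGallaiPartition (c : Sym2 V → C) (a : Finset V) (π : V → ι) (r b : C) : Prop where
  nontrivial : ∃ x ∈ a, ∃ y ∈ a, π x ≠ π y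
  color_eq_or_eq {x y : V} : x ∈ a → y ∈ a → π x ≠ π y → c s(x, y) = r ∨ c s(x, y) = b
  homogeneous {x x' y : V} :
    x ∈ a → x' ∈ a → y ∈ a → π x = π x' → π x ≠ π y → c s(x, y) = c s(x', y)

theorem IsGallaiPartition.comp [Fintype W] {c' : Sym2 W → C} {π : W → ι} {r b : C}
    (h : IsGallaiPartition c' Finset.univ π r b) {a : Finset V} {f : V → W}
    (hf : ∀ w, ∃ x ∈ a, f x = w)
    (hcolor : ∀ x ∈ a, ∀ y ∈ a, f x ≠ f y → c s(x, y) = c' s(f x, f y)) :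
    IsGallaiPartition c a (π ∘ f) r b where
  nontrivial := by
    obtain ⟨x', -, y', -, hxy⟩ := h.nontrivial
    obtain ⟨x, hx, rfl⟩ := hf x'
    obtain ⟨y, hy, rfl⟩ := hf y'
    exact ⟨x, hx, y, hy, hxy⟩
  color_eq_or_eq {x y} hx hy hxy := by
    rw [hcolor x hx y hy (ne_of_apply_ne π hxy)]
    exact h.color_eq_or_eq (Finset.mem_univ _) (Finset.mem_univ _) hxy
  homogeneous {x x' y} hx hx' hy hxx hxy := by
    have hxy' : π (f x') ≠ π (f y) := fun h => hxy (hxx.trans h)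
    rw [hcolor x hx y hy (ne_of_apply_ne π hxy), hcolor x' hx' y hy (ne_of_apply_ne π hxy')]
    exact h.homogeneous (Finset.mem_univ _) (Finset.mem_univ _) (Finset.mem_univ _) hxx hxy

theorem color_eq_color_out (hc : ¬ HasRainbowTriangle c)
    (hxy : (colorGraph c q).connectedComponentMk x ≠ (colorGraph c q).connectedComponentMk y) :
    c s(x, y) = c s(((colorGraph c q).connectedComponentMk x).out,
      ((colorGraph c q).connectedComponentMk y).out) := by
  have hout (x : V) : (colorGraph c q).Reachable x ((colorGraph c q).connectedComponentMk x).out :=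
    (ConnectedComponent.exact (Quot.out_eq _)).symm
  have hxy : ¬ (colorGraph c q).Reachable x y := fun h => hxy (ConnectedComponent.sound h)
  rw [color_eq_of_reachable hc (hout x) hxy, Sym2.eq_swap,
    color_eq_of_reachable hc (hout y) fun h => hxy ((hout x).trans h.symm), Sym2.eq_swap]

theorem exists_not_preconnected_of_three_colors [Finite V] [Nontrivial V]
    (hc : ¬ HasRainbowTriangle c)
    (h : ∀ q₁ q₂, ∃ x y, x ≠ y ∧ c s(x, y) ≠ q₁ ∧ c s(x, y) ≠ q₂) :
    ∃ q, (∃ x y, (colorGraph c q).Adj x y) ∧ ¬ (colorGraph c q).Preconnected := by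
  by_contra! hcon
  have hpre {x y : V} (hxy : x ≠ y) : (colorGraph c (c s(x, y))).Preconnected :=
    hcon _ ⟨x, y, colorGraph_adj.2 ⟨rfl, hxy⟩⟩
  obtain ⟨x₁, y₁, h₁⟩ := exists_pair_ne V
  obtain ⟨x₂, y₂, h₂, h₁₂, -⟩ := h (c s(x₁, y₁)) (c s(x₁, y₁))
  obtain ⟨x₃, y₃, h₃, h₁₃, h₂₃⟩ := h (c s(x₁, y₁)) (c s(x₂, y₂))
  exact not_preconnected_of_three_colors hc h₁₂.symm h₁₃.symm h₂₃.symm (hpre h₁) (hpre h₂) (hpre h₃)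

theorem exists_isGallaiPartition_univ [Fintype V] [Nontrivial V] (hc : ¬ HasRainbowTriangle c) :
    ∃ (r b : C) (ι : Type u) (π : V → ι), IsGallaiPartition c Finset.univ π r b := by
  induction hn : Fintype.card V using Nat.strong_induction_on generalizing V with
  | _ n ih =>
    by_cases htwo : ∃ q₁ q₂, ∀ x y, x ≠ y → c s(x, y) = q₁ ∨ c s(x, y) = q₂
    · obtain ⟨r, b, hrb⟩ := htwo
      obtain ⟨x, y, hxy⟩ := exists_pair_ne V
      exact ⟨r, b, V, id, ⟨x, Finset.mem_univ _, y, Finset.mem_univ _, hxy⟩,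
        fun _ _ hxy => hrb _ _ hxy, by rintro x _ y _ _ _ rfl _; rfl⟩
    push Not at htwo
    obtain ⟨q, ⟨x, y, hxy⟩, hq⟩ := exists_not_preconnected_of_three_colors hc htwo
    have hinj : Function.Injective (Quot.out : (colorGraph c q).ConnectedComponent → V) :=
      Function.LeftInverse.injective Quot.out_eq
    have : Nontrivial (colorGraph c q).ConnectedComponent :=
      not_subsingleton_iff_nontrivial.1 fun h => hq fun x y =>
        ConnectedComponent.exact (Subsingleton.elim _ _)
    have hcard : Fintype.card (colorGraph c q).ConnectedComponent < n :=
      hn ▸ Fintype.card_lt_of_surjective_not_injective (colorGraph c q).connectedComponentMk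
        Quot.mk_surjective fun h => hxy.ne (h (ConnectedComponent.sound hxy.reachable))
    obtain ⟨r, b, ι, π, h⟩ := ih (V := (colorGraph c q).ConnectedComponent) _ hcard
      (not_hasRainbowTriangle_comp_map hc hinj) rfl
    have hsurj (w : (colorGraph c q).ConnectedComponent) :
        ∃ x ∈ Finset.univ, (colorGraph c q).connectedComponentMk x = w := by
      obtain ⟨x, hx⟩ := w.exists_rep
      exact ⟨x, Finset.mem_univ x, hx⟩
    exact ⟨r, b, ι, _, h.comp hsurj fun x _ y _ hxy => color_eq_color_out hc hxy⟩

theorem exists_isGallaiPartition (hc : ¬ HasRainbowTriangle c) {a : Finset V}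
    (ha : a.Nontrivial) : ∃ (r b : C) (ι : Type u) (π : V → ι), IsGallaiPartition c a π r b := by
  have : Nontrivial a := (Finset.nontrivial_coe).2 ha |>.coe_sort
  have hinj : Function.Injective (Subtype.val : a → V) := Subtype.val_injective
  obtain ⟨r, b, ι, π, h⟩ := exists_isGallaiPartition_univ (not_hasRainbowTriangle_comp_map hc hinj)
  obtain ⟨f, hf⟩ := hinj.hasLeftInverse
  have hfa {x : V} (hx : x ∈ a) : (f x : V) = x := congrArg _ (hf ⟨x, hx⟩)
  refine ⟨r, b, ι, _, h.comp (f := f) (fun w => ⟨w, w.2, hf w⟩) fun x hx y hy _ => ?_⟩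
  simp [hfa hx, hfa hy]

theorem exists_isGallaiPartition_of_mem (hc : ¬ HasRainbowTriangle c) {a : Finset V}
    (ha : a.Nontrivial) {K : Finset C} (hK : K.Nontrivial)
    (haK : ∀ x ∈ a, ∀ y ∈ a, x ≠ y → c s(x, y) ∈ K) :
    ∃ r ∈ K, ∃ b ∈ K, r ≠ b ∧ ∃ (ι : Type u) (π : V → ι), IsGallaiPartition c a π r b := by
  obtain ⟨r, b, ι, π, h⟩ := exists_isGallaiPartition hc ha
  obtain ⟨x, hx, y, hy, hxy⟩ := h.nontrivial
  have hmem := haK x hx y hy (ne_of_apply_ne π hxy)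
  by_cases hrb : r ∈ K ∧ b ∈ K ∧ r ≠ b
  · exact ⟨r, hrb.1, b, hrb.2.1, hrb.2.2, ι, π, h⟩
  obtain ⟨q, hq, hne⟩ := hK.exists_ne (c s(x, y))
  refine ⟨_, hmem, q, hq, hne.symm, ι, π, h.nontrivial, fun {x' y'} hx' hy' hxy' => .inl ?_,
    h.homogeneous⟩
  have hmem' := haK x' hx' y' hy' (ne_of_apply_ne π hxy')
  grind [h.color_eq_or_eq hx hy hxy, h.color_eq_or_eq hx' hy' hxy']

end GallaiPartition

section Weight

variable {V C : Type*} {G : SimpleGraph V} {A B a Y : Finset V} {c : Sym2 V → C} {q : C}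
  {K L : Finset C} {S : C → Finset V} {t n : ℕ} {v : V}

theorem isIndepSet_of_isCompleteBetween (hG : (pathPlus t).Free G) (ht : 3 ≤ t)
    (hAB : G.IsCompleteBetween A B) (hA : t ≤ 2 * A.card) (hB : t ≤ 2 * B.card + 1) :
    G.IsIndepSet A := fun _ hx _ hz _ hxz =>
  hG (pathPlus_isContained_of_completeBipartite (fun _ hx _ hy => hAB hx hy) ht hA hB hx hz hxz)

theorem not_forall_adj_of_isCompleteBetween (hG : (pathPlus t).Free G) (ht : 3 ≤ t)
    (hAB : G.IsCompleteBetween A B) (hA : t ≤ 2 * A.card) (hB : t ≤ 2 * B.card)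
    (hvA : ∀ x ∈ A, G.Adj v x) : ¬ ∀ y ∈ B, G.Adj v y := by
  intro hvB
  have hcomplete : G.IsCompleteBetween ↑(insert v A) (B : Set V) := by
    intro x hx y hy
    obtain rfl | hx := Finset.mem_insert.1 hx
    exacts [hvB y hy, hAB hx hy]
  obtain ⟨x, hx⟩ : A.Nonempty := Finset.card_pos.1 (by omega)
  have hcard : A.card ≤ (insert v A).card := Finset.card_le_card (Finset.subset_insert v A)
  exact isIndepSet_of_isCompleteBetween hG ht hcomplete (by omega) (by omega)
    (Finset.mem_insert_self v A) (Finset.mem_insert_of_mem hx) (hvA x hx).ne (hvA x hx)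

/-- The family `S` of sets is attached to `a` over the palette `K`: the edges inside `a` have
colours in `K`, and for each `q ∈ K` the set `S q` has fewer than `t / 2` vertices and is joined to
`a` completely in colour `q`. -/
structure IsAttachment (c : Sym2 V → C) (t : ℕ) (K : Finset C) (a : Finset V)
    (S : C → Finset V) : Prop where
  color_mem {x y : V} : x ∈ a → y ∈ a → x ≠ y → c s(x, y) ∈ K
  isCompleteBetween {q : C} : q ∈ K → (colorGraph c q).IsCompleteBetween a (S q)
  two_mul_card_lt {q : C} : q ∈ K → 2 * (S q).card < t

/-- The total size of the sets attached in the colours of `K`. -/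
def weight (K : Finset C) (S : C → Finset V) : ℕ := ∑ q ∈ K, (S q).card

/-- The bound on twice the number of vertices of `a` and of an attachment to `a` over `n` colours.
For odd `n` it is `2 * (t - 1) * 5 ^ ((n - 1) / 2)`. -/
def maxWeight (t : ℕ) : ℕ → ℕ
  | 0 => t - 1
  | 1 => 2 * (t - 1)
  | n + 2 => 5 * maxWeight t n

/-- The weighted form of the Ramsey upper bound for the vertex set `a` and the palette `K`. It is
weighted so as to pass to the parts of a Gallai partition. -/
def WeightBound (c : Sym2 V → C) (t : ℕ) (K : Finset C) (a : Finset V) : Prop :=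
  ∀ S, IsAttachment c t K a S → 2 * (a.card + weight K S) ≤ maxWeight t K.card

theorem two_mul_maxWeight_succ_le (t n : ℕ) : 2 * maxWeight t (n + 1) ≤ 5 * maxWeight t n := by
  induction n using Nat.twoStepInduction with grind [maxWeight]

theorem succ_mul_le_maxWeight (t n : ℕ) : (n + 1) * (t - 1) ≤ maxWeight t n := by
  induction n using Nat.twoStepInduction with grind [maxWeight]

theorem add_nine_mul_le_maxWeight (t : ℕ) (hn : 1 ≤ n) :
    (n + 9) * (t - 1) ≤ 5 * maxWeight t n := by
  obtain ⟨n, rfl⟩ := Nat.exists_eq_add_of_le' hn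
  induction n using Nat.twoStepInduction with grind [maxWeight]

theorem maxWeight_two_mul_add_one (t m : ℕ) :
    maxWeight t (2 * m + 1) = 2 * ((t - 1) * 5 ^ m) := by
  induction m with
  | zero => simp [maxWeight]
  | succ m ih =>
    rw [Nat.mul_succ, Nat.add_right_comm, maxWeight, ih]
    ring

theorem weight_insert (hq : q ∉ K) : weight (insert q K) S = (S q).card + weight K S :=
  Finset.sum_insert hq

theorem weight_update (hq : q ∉ K) : weight K (Function.update S q Y) = weight K S :=
  Finset.sum_congr rfl fun q' hq' => by
    rw [Function.update_of_ne (ne_of_mem_of_not_mem hq' hq)]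

theorem IsAttachment.two_mul_weight_le (h : IsAttachment c t K a S) (hL : L ⊆ K) :
    2 * weight L S ≤ L.card * (t - 1) := by
  rw [weight, Finset.mul_sum, ← smul_eq_mul (a := L.card)]
  exact Finset.sum_le_card_nsmul _ _ _ fun q hq =>
    Nat.le_sub_one_of_lt (h.two_mul_card_lt (hL hq))

theorem IsAttachment.mono (h : IsAttachment c t K a S) (hA : A ⊆ a) : IsAttachment c t K A S where
  color_mem hx hy := h.color_mem (hA hx) (hA hy)
  isCompleteBetween hq _ hx _ hy := h.isCompleteBetween hq (hA hx) hy
  two_mul_card_lt := h.two_mul_card_lt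

theorem IsAttachment.of_isIndepSet (h : IsAttachment c t (insert q K) a S)
    (ha : (colorGraph c q).IsIndepSet a) : IsAttachment c t K a S where
  color_mem hx hy hxy := (Finset.mem_insert.1 (h.color_mem hx hy hxy)).resolve_left fun hq =>
    ha hx hy hxy (colorGraph_adj.2 ⟨hq, hxy⟩)
  isCompleteBetween hq := h.isCompleteBetween (Finset.mem_insert_of_mem hq)
  two_mul_card_lt hq := h.two_mul_card_lt (Finset.mem_insert_of_mem hq)

theorem IsAttachment.update (h : IsAttachment c t K a S)
    (hY : (colorGraph c q).IsCompleteBetween a Y) (hYt : 2 * Y.card < t) :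
    IsAttachment c t K a (Function.update S q Y) where
  color_mem := h.color_mem
  isCompleteBetween {q'} hq' := by
    obtain rfl | hne := eq_or_ne q' q
    · simpa using hY
    · simpa [hne] using h.isCompleteBetween hq'
  two_mul_card_lt {q'} hq' := by
    obtain rfl | hne := eq_or_ne q' q
    · simpa using hYt
    · simpa [hne] using h.two_mul_card_lt hq'

end Weight

section ReducedGraph

variable {V C ι : Type*} {c : Sym2 V → C} {t : ℕ} {a : Finset V} {π : V → ι} {q : C}
  {i : ι} {v x : V}

/-- The part of `a` with index `i` in the partition of `a` into the fibres of `π`. -/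
noncomputable def part (a : Finset V) (π : V → ι) (i : ι) : Finset V := {x ∈ a | π x = i}

/-- The indices of the heavy parts of `a`, those with at least `t / 2` vertices. -/
noncomputable def heavyParts (a : Finset V) (π : V → ι) (t : ℕ) : Finset ι :=
  {i ∈ a.image π | t ≤ 2 * (part a π i).card}

/-- The vertices of `a` outside its heavy parts. -/
noncomputable def lightVertices (a : Finset V) (π : V → ι) (t : ℕ) : Finset V :=
  {x ∈ a | π x ∉ heavyParts a π t}

/-- The light vertices that are joined to the part with index `i` completely in colour `q`. -/
noncomputable def lightNeighbors (c : Sym2 V → C) (a : Finset V) (π : V → ι) (t : ℕ) (q : C)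
    (i : ι) : Finset V :=
  {v ∈ lightVertices a π t | ∀ x ∈ part a π i, (colorGraph c q).Adj v x}

/-- The reduced graph of colour `q`: two heavy parts are adjacent if they are joined completely in
colour `q`. -/
def reducedGraph (c : Sym2 V → C) (a : Finset V) (π : V → ι) (t : ℕ) (q : C) : SimpleGraph ι where
  Adj i j := i ≠ j ∧ i ∈ heavyParts a π t ∧ j ∈ heavyParts a π t ∧
    (colorGraph c q).IsCompleteBetween (part a π i) (part a π j)
  symm := ⟨fun _ _ h => ⟨h.1.symm, h.2.2.1, h.2.1, h.2.2.2.symm⟩⟩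
  loopless := ⟨fun _ h => h.1 rfl⟩

theorem mem_part : x ∈ part a π i ↔ x ∈ a ∧ π x = i := Finset.mem_filter

theorem mem_lightVertices : x ∈ lightVertices a π t ↔ x ∈ a ∧ π x ∉ heavyParts a π t :=
  Finset.mem_filter

theorem mem_lightNeighbors :
    v ∈ lightNeighbors c a π t q i ↔
      v ∈ lightVertices a π t ∧ ∀ x ∈ part a π i, (colorGraph c q).Adj v x :=
  Finset.mem_filter

theorem part_subset : part a π i ⊆ a := Finset.filter_subset _ _

theorem lightNeighbors_subset : lightNeighbors c a π t q i ⊆ lightVertices a π t :=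
  Finset.filter_subset _ _

theorem lightVertices_subset : lightVertices a π t ⊆ a := Finset.filter_subset _ _

theorem le_two_mul_card_part (hi : i ∈ heavyParts a π t) : t ≤ 2 * (part a π i).card :=
  (Finset.mem_filter.1 hi).2

theorem nonempty_part (hi : i ∈ heavyParts a π t) : (part a π i).Nonempty := by
  obtain ⟨x, hx, hxi⟩ := Finset.mem_image.1 (Finset.mem_filter.1 hi).1
  exact ⟨x, mem_part.2 ⟨hx, hxi⟩⟩

theorem two_mul_card_part_lt (hx : x ∈ lightVertices a π t) :
    2 * (part a π (π x)).card < t := by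
  obtain ⟨hxa, hx⟩ := mem_lightVertices.1 hx
  by_contra! hcon
  exact hx (Finset.mem_filter.2 ⟨Finset.mem_image_of_mem π hxa, hcon⟩)

theorem card_eq_sum_card_part_add_card_lightVertices :
    a.card = ∑ i ∈ heavyParts a π t, (part a π i).card + (lightVertices a π t).card := by
  have hfilter := a.card_filter_add_card_filter_not (π · ∈ heavyParts a π t)
  have hfiber := Finset.card_eq_sum_card_fiberwise (s := {x ∈ a | π x ∈ heavyParts a π t})
    (t := heavyParts a π t) (f := π) fun x hx => (Finset.mem_filter.1 hx).2
  rw [← hfilter, hfiber]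
  congr! 3 with i hi
  grind [part]

theorem isCompleteBetween_lightNeighbors :
    (colorGraph c q).IsCompleteBetween (lightNeighbors c a π t q i) (part a π i) :=
  fun _ hv _ hx => (mem_lightNeighbors.1 hv).2 _ hx

end ReducedGraph

section GallaiStep

variable {V C ι : Type*} {c : Sym2 V → C} {t : ℕ} {L : Finset C} {S : C → Finset V}
  {a A Y Z : Finset V} {π : V → ι} {q r b : C} {i j k : ι} {v x : V}

/-- The situation in the induction step for the weight bound over a palette of at least three
colours: `r` and `b` are the colours of a Gallai partition of `a`, and `L` consists of the other
colours. -/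
structure IsGallaiStep (c : Sym2 V → C) (t : ℕ) (L : Finset C) (S : C → Finset V) (a : Finset V)
    (π : V → ι) (r b : C) : Prop where
  four_le : 4 ≤ t
  free (q : C) : (pathPlus t).Free (colorGraph c q)
  colors_ne : r ≠ b
  left_notMem : r ∉ L
  right_notMem : b ∉ L
  nonempty : L.Nonempty
  isAttachment : IsAttachment c t (insert r (insert b L)) a S
  isGallaiPartition : IsGallaiPartition c a π r b
  weightBound_of_ssubset_palette {A : Finset V} {K : Finset C} :
    A ⊆ a → K ⊂ insert r (insert b L) → WeightBound c t K A
  weightBound_of_ssubset {A : Finset V} : A ⊂ a → WeightBound c t (insert r (insert b L)) A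

namespace IsGallaiStep

theorem swap (h : IsGallaiStep c t L S a π r b) : IsGallaiStep c t L S a π b r where
  four_le := h.four_le
  free := h.free
  colors_ne := h.colors_ne.symm
  left_notMem := h.right_notMem
  right_notMem := h.left_notMem
  nonempty := h.nonempty
  isAttachment := Finset.insert_comm r b L ▸ h.isAttachment
  isGallaiPartition :=
    { nontrivial := h.isGallaiPartition.nontrivial
      color_eq_or_eq := fun hx hy hxy => (h.isGallaiPartition.color_eq_or_eq hx hy hxy).symm
      homogeneous := h.isGallaiPartition.homogeneous }
  weightBound_of_ssubset_palette := Finset.insert_comm r b L ▸ h.weightBound_of_ssubset_palette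
  weightBound_of_ssubset := Finset.insert_comm r b L ▸ h.weightBound_of_ssubset

variable (h : IsGallaiStep c t L S a π r b)
include h

theorem two_mul_card_left_lt : 2 * (S r).card < t :=
  h.isAttachment.two_mul_card_lt (Finset.mem_insert_self _ _)

theorem isCompleteBetween_left : (colorGraph c r).IsCompleteBetween a (S r) :=
  h.isAttachment.isCompleteBetween (Finset.mem_insert_self _ _)

theorem left_notMem_insert : r ∉ insert b L := by
  simp [h.colors_ne, h.left_notMem]

theorem two_mul_card_add_le_of_isIndepSet_of_isIndepSet (hA : A ⊆ a)
    (hr : (colorGraph c r).IsIndepSet A) (hb : (colorGraph c b).IsIndepSet A) :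
    2 * (A.card + weight L S) ≤ maxWeight t L.card :=
  have hL : L ⊂ insert r (insert b L) :=
    (Finset.ssubset_insert h.right_notMem).trans (Finset.ssubset_insert h.left_notMem_insert)
  h.weightBound_of_ssubset_palette hA hL S
    (((h.isAttachment.mono hA).of_isIndepSet hr).of_isIndepSet hb)

theorem two_mul_card_add_le_of_isIndepSet (hA : A ⊆ a) (hr : (colorGraph c r).IsIndepSet A)
    (hY : (colorGraph c b).IsCompleteBetween A Y) (hYt : 2 * Y.card < t) :
    2 * (A.card + weight L S + Y.card) ≤ maxWeight t (L.card + 1) := by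
  have := h.weightBound_of_ssubset_palette hA (Finset.ssubset_insert h.left_notMem_insert) _
    (((h.isAttachment.mono hA).of_isIndepSet hr).update hY hYt)
  rw [weight_insert h.right_notMem, weight_update h.right_notMem, Function.update_self,
    Finset.card_insert_of_notMem h.right_notMem] at this
  omega

theorem two_mul_card_add_le_of_ssubset (hA : A ⊂ a)
    (hY : (colorGraph c r).IsCompleteBetween A Y) (hZ : (colorGraph c b).IsCompleteBetween A Z)
    (hYt : 2 * Y.card < t) (hZt : 2 * Z.card < t) :
    2 * (A.card + weight L S + Y.card + Z.card) ≤ 5 * maxWeight t L.card := by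
  have := h.weightBound_of_ssubset hA _
    (((h.isAttachment.mono hA.subset).update hY hYt).update hZ hZt)
  rw [weight_insert h.left_notMem_insert, weight_insert h.right_notMem,
    weight_update h.right_notMem, weight_update h.left_notMem, Function.update_self,
    Function.update_of_ne h.colors_ne, Function.update_self,
    Finset.card_insert_of_notMem h.left_notMem_insert,
    Finset.card_insert_of_notMem h.right_notMem] at this
  simp only [maxWeight] at this
  omega

theorem two_mul_le_maxWeight : 2 * (t - 1) ≤ maxWeight t L.card :=
  (Nat.mul_le_mul_right _ (Nat.succ_le_succ h.nonempty.card_pos)).trans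
    (succ_mul_le_maxWeight t L.card)

theorem nine_mul_add_weight_le : 9 * (t - 1) + 2 * weight L S ≤ 5 * maxWeight t L.card := by
  have hL : L ⊆ insert r (insert b L) := by grind
  have := h.isAttachment.two_mul_weight_le hL
  have := add_nine_mul_le_maxWeight t h.nonempty.card_pos
  linarith

theorem adj_or_adj (hv : v ∈ a) (hx : x ∈ a) (hvx : π v ≠ π x) :
    (colorGraph c r).Adj v x ∨ (colorGraph c b).Adj v x := by
  simpa [ne_of_apply_ne π hvx] using h.isGallaiPartition.color_eq_or_eq hv hx hvx

theorem forall_adj_or_forall_adj (hv : v ∈ a) (hvi : π v ≠ i) :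
    (∀ x ∈ part a π i, (colorGraph c r).Adj v x) ∨
      ∀ x ∈ part a π i, (colorGraph c b).Adj v x := by
  by_contra! hcon
  obtain ⟨⟨x, hx, hvx⟩, y, hy, hvy⟩ := hcon
  obtain ⟨hxa, rfl⟩ := mem_part.1 hx
  obtain ⟨hya, hyx⟩ := mem_part.1 hy
  have heq := h.isGallaiPartition.homogeneous hya hxa hv hyx (hyx ▸ hvi.symm)
  have hne : v ≠ y := ne_of_apply_ne π (hyx ▸ hvi)
  have := (h.adj_or_adj hv hxa hvi).resolve_left hvx
  rw [colorGraph_adj] at this hvy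
  exact hvy ⟨by rw [Sym2.eq_swap, heq, Sym2.eq_swap, this.1], hne⟩

theorem mem_lightNeighbors_or (hv : v ∈ lightVertices a π t) (hi : i ∈ heavyParts a π t) :
    v ∈ lightNeighbors c a π t r i ∨ v ∈ lightNeighbors c a π t b i := by
  obtain ⟨hva, hvJ⟩ := mem_lightVertices.1 hv
  exact (h.forall_adj_or_forall_adj hva (ne_of_mem_of_not_mem hi hvJ).symm).imp
    (fun hvi => mem_lightNeighbors.2 ⟨hv, hvi⟩) fun hvi => mem_lightNeighbors.2 ⟨hv, hvi⟩

theorem reducedGraph_adj_or_adj (hi : i ∈ heavyParts a π t) (hj : j ∈ heavyParts a π t)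
    (hij : i ≠ j) : (reducedGraph c a π t r).Adj i j ∨ (reducedGraph c a π t b).Adj i j := by
  obtain ⟨v, hv⟩ := nonempty_part hi
  obtain ⟨hva, rfl⟩ := mem_part.1 hv
  have hcomplete {q : C} (hvq : ∀ y ∈ part a π j, (colorGraph c q).Adj v y) :
      (reducedGraph c a π t q).Adj (π v) j := by
    refine ⟨hij, hi, hj, fun x hx y hy => ?_⟩
    obtain ⟨hxa, hxv⟩ := mem_part.1 hx
    obtain ⟨hya, rfl⟩ := mem_part.1 hy
    have heq := h.isGallaiPartition.homogeneous hxa hva hya hxv (hxv ▸ hij)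
    exact colorGraph_adj.2 ⟨heq.trans (hvq y hy).1, ne_of_apply_ne π (hxv ▸ hij)⟩
  exact (h.forall_adj_or_forall_adj hva hij).imp hcomplete hcomplete

theorem not_forall_adj_of_reducedGraph_adj (hij : (reducedGraph c a π t q).Adj i j)
    (hv : ∀ x ∈ part a π i, (colorGraph c q).Adj v x) :
    ¬ ∀ x ∈ part a π j, (colorGraph c q).Adj v x :=
  not_forall_adj_of_isCompleteBetween (h.free q) (by linarith [h.four_le]) hij.2.2.2
    (le_two_mul_card_part hij.2.1) (le_two_mul_card_part hij.2.2.1) hv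

theorem lightNeighbors_subset_of_adj (hij : (reducedGraph c a π t r).Adj i j) :
    lightNeighbors c a π t r i ⊆ lightNeighbors c a π t b j := fun _ hv =>
  (h.mem_lightNeighbors_or (lightNeighbors_subset hv) hij.2.2.1).resolve_left fun hvj =>
    h.not_forall_adj_of_reducedGraph_adj hij (mem_lightNeighbors.1 hv).2
      (mem_lightNeighbors.1 hvj).2

theorem reducedGraph_adj_of_adj_of_adj (hij : (reducedGraph c a π t r).Adj i j)
    (hik : (reducedGraph c a π t r).Adj i k) (hjk : j ≠ k) : (reducedGraph c a π t b).Adj j k := by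
  refine (h.reducedGraph_adj_or_adj hij.2.2.1 hik.2.2.1 hjk).resolve_left fun hjk => ?_
  obtain ⟨v, hv⟩ := nonempty_part hij.2.1
  exact h.not_forall_adj_of_reducedGraph_adj hjk (fun x hx => hij.2.2.2 hv hx)
    fun x hx => hik.2.2.2 hv hx

theorem attached_eq_empty (hij : (reducedGraph c a π t r).Adj i j) : S r = ∅ :=
  Finset.eq_empty_of_forall_notMem fun _ hv => h.not_forall_adj_of_reducedGraph_adj hij
    (fun _ hx => (h.isCompleteBetween_left (part_subset hx) hv).symm)
    fun _ hx => (h.isCompleteBetween_left (part_subset hx) hv).symm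

theorem isIndepSet_part (hi : i ∈ heavyParts a π t)
    (hY : (colorGraph c q).IsCompleteBetween (part a π i) Y) (hYt : t ≤ 2 * Y.card) :
    (colorGraph c q).IsIndepSet (part a π i) :=
  isIndepSet_of_isCompleteBetween (h.free q) (by linarith [h.four_le]) hY
    (le_two_mul_card_part hi) (by omega)

theorem isIndepSet_part_of_adj (hij : (reducedGraph c a π t q).Adj i j) :
    (colorGraph c q).IsIndepSet (part a π i) :=
  h.isIndepSet_part hij.2.1 hij.2.2.2 (le_two_mul_card_part hij.2.2.1)

theorem isIndepSet_lightNeighbors (hi : i ∈ heavyParts a π t) (hA : A ⊆ lightNeighbors c a π t q i)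
    (hAt : t ≤ 2 * A.card) : (colorGraph c q).IsIndepSet A :=
  isIndepSet_of_isCompleteBetween (h.free q) (by linarith [h.four_le])
    (fun _ hv _ hx => isCompleteBetween_lightNeighbors (hA hv) hx) hAt
    ((le_two_mul_card_part hi).trans (Nat.le_succ _))

theorem two_mul_card_lightNeighbors_le (hi : i ∈ heavyParts a π t) :
    2 * (lightNeighbors c a π t r i).card ≤ 3 * (t - 1) := by
  by_cases hlight : 2 * (lightNeighbors c a π t r i).card < t
  · omega
  have hindep := h.isIndepSet_lightNeighbors hi subset_rfl (not_lt.1 hlight)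
  have hsub : lightNeighbors c a π t r i ⊆ a := lightNeighbors_subset.trans lightVertices_subset
  have hmulti : IsLightMultipartite (colorGraph c b) (lightNeighbors c a π t r i) π t :=
    { adj := fun x hx y hy hxy => (h.adj_or_adj (hsub hx) (hsub hy) hxy).resolve_left
        (hindep hx hy (ne_of_apply_ne π hxy))
      light := fun x hx => (Nat.mul_le_mul_left 2 (Finset.card_le_card
        (Finset.filter_subset_filter _ hsub))).trans_lt
          (two_mul_card_part_lt (lightNeighbors_subset hx)) }
  exact hmulti.two_mul_card_le (h.free b) h.four_le

theorem two_mul_card_lightNeighbors_le_of_adj (hij : (reducedGraph c a π t r).Adj i j) :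
    2 * (lightNeighbors c a π t r i).card ≤ t - 1 := by
  by_contra! hcon
  have hsub : lightNeighbors c a π t r i ⊆ a := lightNeighbors_subset.trans lightVertices_subset
  have hindep_r := h.isIndepSet_lightNeighbors (A := lightNeighbors c a π t r i) (q := r) hij.2.1
    subset_rfl (by omega)
  have hindep_b := h.isIndepSet_lightNeighbors hij.2.2.1 (h.lightNeighbors_subset_of_adj hij)
    (by omega)
  obtain ⟨z, hz⟩ : (lightNeighbors c a π t r i).Nonempty := Finset.card_pos.1 (by omega)
  have hpart : lightNeighbors c a π t r i ⊆ part a π (π z) := by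
    refine fun x hx => mem_part.2 ⟨hsub hx, by_contra fun hxz => ?_⟩
    have hne := ne_of_apply_ne π hxz
    exact (h.adj_or_adj (hsub hx) (hsub hz) hxz).elim (hindep_r hx hz hne) (hindep_b hx hz hne)
  have := Finset.card_le_card hpart
  have := two_mul_card_part_lt (lightNeighbors_subset hz)
  omega

theorem card_lightVertices_le (hi : i ∈ heavyParts a π t) :
    (lightVertices a π t).card ≤
      (lightNeighbors c a π t r i).card + (lightNeighbors c a π t b i).card :=
  (Finset.card_le_card fun _ hv => Finset.mem_union.2 (h.mem_lightNeighbors_or hv hi)).trans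
    (Finset.card_union_le _ _)

end IsGallaiStep

end GallaiStep

section HeavyParts

variable {V C ι : Type*} {c : Sym2 V → C} {t : ℕ} {L : Finset C} {S : C → Finset V}
  {a : Finset V} {π : V → ι} {r b : C} {i j k : ι} {N : Finset ι}

namespace IsGallaiStep

variable (h : IsGallaiStep c t L S a π r b)
include h

theorem two_mul_card_add_le_of_heavyParts_eq_empty (hJ : heavyParts a π t = ∅) :
    2 * (a.card + weight L S + (S r).card + (S b).card) ≤ 5 * maxWeight t L.card := by
  have hmulti : IsLightMultipartite (colorGraph c r ⊔ colorGraph c b) a π t :=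
    { adj := fun x hx y hy hxy => (sup_adj _ _ _ _).2 (h.adj_or_adj hx hy hxy)
      light := fun x hx => two_mul_card_part_lt (mem_lightVertices.2 ⟨hx, by simp [hJ]⟩) }
  have := h.nine_mul_add_weight_le
  have := h.two_mul_card_left_lt
  have := h.swap.two_mul_card_left_lt
  obtain hr | ⟨v, hv⟩ := (S r).eq_empty_or_nonempty
  · obtain hb | ⟨v, hv⟩ := (S b).eq_empty_or_nonempty
    · have := hmulti.two_mul_card_le_of_sup (h.free r) (h.free b) h.four_le
      simp only [hr, hb, Finset.card_empty]
      omega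
    · have := (sup_comm (colorGraph c r) _ ▸ hmulti).card_le_of_dominating (h.free b) (h.free r)
        h.four_le fun x hx => h.swap.isCompleteBetween_left hx hv
      omega
  · have := hmulti.card_le_of_dominating (h.free r) (h.free b) h.four_le
      fun x hx => h.isCompleteBetween_left hx hv
    omega

theorem isCompleteBetween_lightNeighbors_union :
    (colorGraph c r).IsCompleteBetween (part a π i)
      ↑(lightNeighbors c a π t r i ∪ S r) := by
  intro x hx y hy
  obtain hy | hy := Finset.mem_union.1 hy
  · exact (isCompleteBetween_lightNeighbors hy hx).symm
  · exact h.isCompleteBetween_left (part_subset hx) hy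

theorem card_lightNeighbors_union :
    (lightNeighbors c a π t r i ∪ S r).card = (lightNeighbors c a π t r i).card + (S r).card :=
  Finset.card_union_of_disjoint <| Finset.disjoint_left.2 fun _ hx hxS =>
    (h.isCompleteBetween_left (lightVertices_subset (lightNeighbors_subset hx)) hxS).ne rfl

theorem part_ssubset : part a π i ⊂ a := by
  obtain ⟨x, hx, y, hy, hxy⟩ := h.isGallaiPartition.nontrivial
  refine part_subset.ssubset_of_ne fun hpart => hxy ?_
  rw [← hpart] at hx hy
  exact (mem_part.1 hx).2.trans (mem_part.1 hy).2.symm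

theorem two_mul_card_part_add_card_lightNeighbors_le_of_le (hi : i ∈ heavyParts a π t)
    (hr : t ≤ 2 * (lightNeighbors c a π t r i ∪ S r).card) :
    2 * ((part a π i).card + weight L S + (lightNeighbors c a π t r i).card + (S r).card +
      (lightNeighbors c a π t b i).card + (S b).card) ≤ 5 * maxWeight t L.card := by
  have hindep := h.isIndepSet_part hi h.isCompleteBetween_lightNeighbors_union hr
  have hcard := h.swap.card_lightNeighbors_union (i := i)
  have := h.two_mul_card_left_lt
  have := h.two_mul_card_lightNeighbors_le hi
  have := h.two_mul_le_maxWeight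
  by_cases hb : t ≤ 2 * (lightNeighbors c a π t b i ∪ S b).card
  · have := h.two_mul_card_add_le_of_isIndepSet_of_isIndepSet part_subset hindep
      (h.isIndepSet_part hi h.swap.isCompleteBetween_lightNeighbors_union hb)
    have := h.swap.two_mul_card_left_lt
    have := h.swap.two_mul_card_lightNeighbors_le hi
    omega
  · have := h.two_mul_card_add_le_of_isIndepSet part_subset hindep
      h.swap.isCompleteBetween_lightNeighbors_union (not_le.1 hb)
    have := two_mul_maxWeight_succ_le t L.card
    omega

theorem two_mul_card_part_add_card_lightNeighbors_le (hi : i ∈ heavyParts a π t) :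
    2 * ((part a π i).card + weight L S + (lightNeighbors c a π t r i).card + (S r).card +
      (lightNeighbors c a π t b i).card + (S b).card) ≤ 5 * maxWeight t L.card := by
  by_cases hr : t ≤ 2 * (lightNeighbors c a π t r i ∪ S r).card
  · exact h.two_mul_card_part_add_card_lightNeighbors_le_of_le hi hr
  by_cases hb : t ≤ 2 * (lightNeighbors c a π t b i ∪ S b).card
  · linarith [h.swap.two_mul_card_part_add_card_lightNeighbors_le_of_le hi hb]
  have := h.two_mul_card_add_le_of_ssubset h.part_ssubset h.isCompleteBetween_lightNeighbors_union
    h.swap.isCompleteBetween_lightNeighbors_union (not_le.1 hr) (not_le.1 hb)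
  rw [h.card_lightNeighbors_union, h.swap.card_lightNeighbors_union] at this
  linarith

theorem two_mul_card_add_le_of_heavyParts_eq_singleton (hJ : heavyParts a π t = {i}) :
    2 * (a.card + weight L S + (S r).card + (S b).card) ≤ 5 * maxWeight t L.card := by
  have hi : i ∈ heavyParts a π t := by simp [hJ]
  have ha := card_eq_sum_card_part_add_card_lightVertices (a := a) (π := π) (t := t)
  rw [hJ, Finset.sum_singleton] at ha
  have := h.card_lightVertices_le hi
  have := h.two_mul_card_part_add_card_lightNeighbors_le hi
  omega

theorem two_mul_card_part_add_le_or_of_adj (hij : (reducedGraph c a π t r).Adj i j) :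
    2 * ((part a π i).card + weight L S) ≤ maxWeight t L.card ∨
      2 * ((part a π i).card + weight L S + (lightNeighbors c a π t b i).card + (S b).card) ≤
        maxWeight t (L.card + 1) := by
  have hindep := h.isIndepSet_part_of_adj hij
  refine (le_or_gt t (2 * (lightNeighbors c a π t b i ∪ S b).card)).imp (fun hb => ?_) fun hb => ?_
  · exact h.two_mul_card_add_le_of_isIndepSet_of_isIndepSet part_subset hindep
      (h.isIndepSet_part hij.2.1 h.swap.isCompleteBetween_lightNeighbors_union hb)
  · have := h.two_mul_card_add_le_of_isIndepSet part_subset hindep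
      h.swap.isCompleteBetween_lightNeighbors_union hb
    rw [h.swap.card_lightNeighbors_union] at this
    linarith

theorem two_mul_card_add_le_of_heavyParts_eq_pair_of_adj (hJ : heavyParts a π t = {i, j})
    (hij : (reducedGraph c a π t r).Adj i j) :
    2 * (a.card + weight L S + (S r).card + (S b).card) ≤ 5 * maxWeight t L.card := by
  have ha := card_eq_sum_card_part_add_card_lightVertices (a := a) (π := π) (t := t)
  rw [hJ, Finset.sum_pair hij.1] at ha
  have := two_mul_maxWeight_succ_le t L.card
  have := h.two_mul_le_maxWeight
  have := h.swap.two_mul_card_left_lt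
  have := h.card_lightVertices_le hij.2.1
  have := h.card_lightVertices_le hij.2.2.1
  have := h.two_mul_card_lightNeighbors_le_of_adj hij
  have := h.two_mul_card_lightNeighbors_le_of_adj hij.symm
  have := h.swap.two_mul_card_lightNeighbors_le hij.2.1
  have := Finset.card_le_card (h.lightNeighbors_subset_of_adj hij)
  rw [h.attached_eq_empty hij, Finset.card_empty]
  obtain hi | hi := h.two_mul_card_part_add_le_or_of_adj hij <;>
  obtain hj | hj := h.two_mul_card_part_add_le_or_of_adj hij.symm <;>
  omega

theorem two_mul_card_add_le_of_heavyParts_eq_pair (hij : i ≠ j) (hJ : heavyParts a π t = {i, j}) :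
    2 * (a.card + weight L S + (S r).card + (S b).card) ≤ 5 * maxWeight t L.card := by
  have hi : i ∈ heavyParts a π t := by simp [hJ]
  have hj : j ∈ heavyParts a π t := by simp [hJ]
  obtain hadj | hadj := h.reducedGraph_adj_or_adj hi hj hij
  · exact h.two_mul_card_add_le_of_heavyParts_eq_pair_of_adj hJ hadj
  · linarith [h.swap.two_mul_card_add_le_of_heavyParts_eq_pair_of_adj hJ hadj]

theorem two_mul_card_part_add_le (hij : (reducedGraph c a π t r).Adj i j)
    (hik : (reducedGraph c a π t b).Adj i k) :
    2 * ((part a π i).card + weight L S) ≤ maxWeight t L.card :=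
  h.two_mul_card_add_le_of_isIndepSet_of_isIndepSet part_subset (h.isIndepSet_part_of_adj hij)
    (h.isIndepSet_part_of_adj hik)

theorem lightNeighbors_eq_empty (hij : (reducedGraph c a π t r).Adj i j)
    (hik : (reducedGraph c a π t r).Adj i k) (hjk : j ≠ k) :
    lightNeighbors c a π t r i = ∅ :=
  Finset.eq_empty_of_forall_notMem fun _ hv =>
    h.not_forall_adj_of_reducedGraph_adj (h.reducedGraph_adj_of_adj_of_adj hij hik hjk)
      (mem_lightNeighbors.1 (h.lightNeighbors_subset_of_adj hij hv)).2
      (mem_lightNeighbors.1 (h.lightNeighbors_subset_of_adj hik hv)).2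

theorem two_mul_card_add_le_of_heavyParts_eq_triple_of_adj (hjk : j ≠ k)
    (hJ : heavyParts a π t = {i, j, k}) (hij : (reducedGraph c a π t r).Adj i j)
    (hik : (reducedGraph c a π t r).Adj i k) :
    2 * (a.card + weight L S + (S r).card + (S b).card) ≤ 5 * maxWeight t L.card := by
  have hjk := h.reducedGraph_adj_of_adj_of_adj hij hik hjk
  have ha := card_eq_sum_card_part_add_card_lightVertices (a := a) (π := π) (t := t)
  rw [hJ, Finset.sum_insert (by simp [hij.1, hik.1]), Finset.sum_pair hjk.1] at ha
  have hlight := h.card_lightVertices_le hij.2.1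
  rw [h.lightNeighbors_eq_empty hij hik hjk.1, Finset.card_empty] at hlight
  have := h.card_lightVertices_le hij.2.2.1
  have := h.two_mul_card_lightNeighbors_le_of_adj hij.symm
  have := h.swap.two_mul_card_lightNeighbors_le_of_adj hjk
  have := h.two_mul_card_part_add_le hij.symm hjk
  have := h.two_mul_card_part_add_le hik.symm hjk.symm
  have := two_mul_maxWeight_succ_le t L.card
  have := h.two_mul_le_maxWeight
  rw [h.attached_eq_empty hij, h.swap.attached_eq_empty hjk, Finset.card_empty]
  obtain hi | hi := h.two_mul_card_part_add_le_or_of_adj hij <;> omega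

theorem two_mul_card_add_le_of_heavyParts_eq_triple (hij : i ≠ j) (hik : i ≠ k) (hjk : j ≠ k)
    (hJ : heavyParts a π t = {i, j, k}) :
    2 * (a.card + weight L S + (S r).card + (S b).card) ≤ 5 * maxWeight t L.card := by
  have hi : i ∈ heavyParts a π t := by simp [hJ]
  have hj : j ∈ heavyParts a π t := by simp [hJ]
  have hk : k ∈ heavyParts a π t := by simp [hJ]
  have hJi : heavyParts a π t = {j, i, k} := hJ.trans (Finset.insert_comm _ _ _)
  have hJk : heavyParts a π t = {k, i, j} := by rw [hJ]; grind
  have hr {i j k} := h.two_mul_card_add_le_of_heavyParts_eq_triple_of_adj (i := i) (j := j) (k := k)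
  have hb {i j k} := h.swap.two_mul_card_add_le_of_heavyParts_eq_triple_of_adj
    (i := i) (j := j) (k := k)
  rw [add_right_comm _ (S b).card] at hb
  obtain rij | bij := h.reducedGraph_adj_or_adj hi hj hij <;>
  obtain rik | bik := h.reducedGraph_adj_or_adj hi hk hik
  · exact hr hjk hJ rij rik
  · obtain rjk | bjk := h.reducedGraph_adj_or_adj hj hk hjk
    · exact hr hik hJi rij.symm rjk
    · exact hb hij hJk bik.symm bjk.symm
  · obtain rjk | bjk := h.reducedGraph_adj_or_adj hj hk hjk
    · exact hr hij hJk rik.symm rjk.symm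
    · exact hb hik hJi bij.symm bjk
  · exact hb hjk hJ bij bik

theorem not_reducedGraph_adj_of_adj (hij : (reducedGraph c a π t r).Adj i j) :
    ¬ (reducedGraph c a π t b).Adj i j := by
  intro hij_b
  obtain ⟨x, hx⟩ := nonempty_part hij.2.1
  obtain ⟨y, hy⟩ := nonempty_part hij.2.2.1
  exact h.colors_ne ((hij.2.2.2 hx hy).1.symm.trans (hij_b.2.2.2 hx hy).1)

theorem card_le_two_of_forall_adj (hN : ∀ j ∈ N, (reducedGraph c a π t r).Adj i j) :
    N.card ≤ 2 := by
  by_contra! hcard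
  obtain ⟨j, hj, k, hk, l, hl, hjk, hjl, hkl⟩ := Finset.two_lt_card.1 hcard
  have bjk := h.reducedGraph_adj_of_adj_of_adj (hN j hj) (hN k hk) hjk
  have bjl := h.reducedGraph_adj_of_adj_of_adj (hN j hj) (hN l hl) hjl
  exact h.not_reducedGraph_adj_of_adj (h.swap.reducedGraph_adj_of_adj_of_adj bjk bjl hkl)
    (h.reducedGraph_adj_of_adj_of_adj (hN k hk) (hN l hl) hkl)

theorem exists_forall_adj_and_card_heavyParts_le (hi : i ∈ heavyParts a π t) :
    ∃ N : Finset ι, (∀ j ∈ N, (reducedGraph c a π t r).Adj i j) ∧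
      (heavyParts a π t).card ≤ N.card + 3 := by
  refine ⟨{j ∈ (heavyParts a π t).erase i | (reducedGraph c a π t r).Adj i j},
    fun j hj => (Finset.mem_filter.1 hj).2, ?_⟩
  have hsplit := Finset.card_filter_add_card_filter_not (s := (heavyParts a π t).erase i)
    fun j => (reducedGraph c a π t r).Adj i j
  have hblue := h.swap.card_le_two_of_forall_adj (i := i)
    (N := {j ∈ (heavyParts a π t).erase i | ¬ (reducedGraph c a π t r).Adj i j}) fun j hj => by
      obtain ⟨hj, hij⟩ := Finset.mem_filter.1 hj
      obtain ⟨hji, hj⟩ := Finset.mem_erase.1 hj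
      exact (h.reducedGraph_adj_or_adj hi hj hji.symm).resolve_left hij
  rw [Finset.card_erase_of_mem hi] at hsplit
  omega

theorem exists_reducedGraph_adj (hJ : 4 ≤ (heavyParts a π t).card) (hi : i ∈ heavyParts a π t) :
    ∃ j, (reducedGraph c a π t r).Adj i j := by
  obtain ⟨N, hN, hcard⟩ := h.exists_forall_adj_and_card_heavyParts_le hi
  obtain ⟨j, hj⟩ : N.Nonempty := Finset.card_pos.1 (by omega)
  exact ⟨j, hN j hj⟩

theorem card_heavyParts_le_five : (heavyParts a π t).card ≤ 5 := by
  obtain hJ | ⟨i, hi⟩ := (heavyParts a π t).eq_empty_or_nonempty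
  · simp [hJ]
  · obtain ⟨N, hN, hcard⟩ := h.exists_forall_adj_and_card_heavyParts_le hi
    have := h.card_le_two_of_forall_adj hN
    omega

theorem lightNeighbors_eq_empty_of_five_le (hJ : 5 ≤ (heavyParts a π t).card)
    (hi : i ∈ heavyParts a π t) : lightNeighbors c a π t r i = ∅ := by
  obtain ⟨N, hN, hcard⟩ := h.exists_forall_adj_and_card_heavyParts_le hi
  obtain ⟨j, hj, k, hk, hjk⟩ : ∃ j ∈ N, ∃ k ∈ N, j ≠ k := Finset.one_lt_card.1 (by omega)
  exact h.lightNeighbors_eq_empty (hN j hj) (hN k hk) hjk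

theorem two_mul_card_add_le_of_four_le (hJ : 4 ≤ (heavyParts a π t).card) :
    2 * (a.card + weight L S + (S r).card + (S b).card) ≤ 5 * maxWeight t L.card := by
  have hsum : 2 * ∑ i ∈ heavyParts a π t, ((part a π i).card + weight L S) ≤
      (heavyParts a π t).card * maxWeight t L.card := by
    rw [Finset.mul_sum, ← smul_eq_mul (a := (heavyParts a π t).card)]
    refine Finset.sum_le_card_nsmul _ _ _ fun i hi => ?_
    obtain ⟨j, hij⟩ := h.exists_reducedGraph_adj hJ hi
    obtain ⟨k, hik⟩ := h.swap.exists_reducedGraph_adj hJ hi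
    exact h.two_mul_card_part_add_le hij hik
  rw [Finset.sum_add_distrib, Finset.sum_const, smul_eq_mul] at hsum
  have ha := card_eq_sum_card_part_add_card_lightVertices (a := a) (π := π) (t := t)
  obtain ⟨i, hi⟩ := Finset.card_pos.1 (by omega : 0 < (heavyParts a π t).card)
  obtain ⟨j, hij⟩ := h.exists_reducedGraph_adj hJ hi
  obtain ⟨k, hik⟩ := h.swap.exists_reducedGraph_adj hJ hi
  have hlight := h.card_lightVertices_le hi
  rw [h.attached_eq_empty hij, h.swap.attached_eq_empty hik, Finset.card_empty]
  obtain hfour | hfive := hJ.eq_or_lt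
  · have := h.two_mul_card_lightNeighbors_le_of_adj hij
    have := h.swap.two_mul_card_lightNeighbors_le_of_adj hik
    have := h.two_mul_le_maxWeight
    rw [← hfour] at hsum
    omega
  · rw [h.lightNeighbors_eq_empty_of_five_le hfive hi,
      h.swap.lightNeighbors_eq_empty_of_five_le hfive hi, Finset.card_empty] at hlight
    rw [(h.card_heavyParts_le_five.antisymm hfive :)] at hsum
    omega

theorem two_mul_card_add_weight_le :
    2 * (a.card + weight (insert r (insert b L)) S) ≤
      maxWeight t (insert r (insert b L)).card := by
  rw [weight_insert h.left_notMem_insert, weight_insert h.right_notMem,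
    Finset.card_insert_of_notMem h.left_notMem_insert,
    Finset.card_insert_of_notMem h.right_notMem, maxWeight]
  suffices 2 * (a.card + weight L S + (S r).card + (S b).card) ≤ 5 * maxWeight t L.card by linarith
  by_cases hfour : 4 ≤ (heavyParts a π t).card
  · exact h.two_mul_card_add_le_of_four_le hfour
  interval_cases hcard : (heavyParts a π t).card
  · exact h.two_mul_card_add_le_of_heavyParts_eq_empty (Finset.card_eq_zero.1 hcard)
  · obtain ⟨i, hJ⟩ := Finset.card_eq_one.1 hcard
    exact h.two_mul_card_add_le_of_heavyParts_eq_singleton hJ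
  · obtain ⟨i, j, hij, hJ⟩ := Finset.card_eq_two.1 hcard
    exact h.two_mul_card_add_le_of_heavyParts_eq_pair hij hJ
  · obtain ⟨i, j, k, hij, hik, hjk, hJ⟩ := Finset.card_eq_three.1 hcard
    exact h.two_mul_card_add_le_of_heavyParts_eq_triple hij hik hjk hJ

end IsGallaiStep

end HeavyParts

section UpperBound

universe u

variable {V C : Type*} {G H : SimpleGraph V} {a S : Finset V} {c : Sym2 V → C} {K : Finset C}
  {r b : C} {t : ℕ}

theorem card_add_card_le_of_isClique (hG : (pathPlus t).Free G) (ht : 3 ≤ t) (ha : G.IsClique a)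
    (haS : G.IsCompleteBetween a S) (hS : 2 * S.card < t) : a.card + S.card ≤ t - 1 := by
  by_contra! hcon
  obtain ⟨A, hA, hAc⟩ := Finset.exists_subset_card_eq (show (t + 1) / 2 ≤ a.card by omega)
  have hcomplete : G.IsCompleteBetween A ↑(a \ A ∪ S) := by
    intro x hx y hy
    obtain hy | hy := Finset.mem_union.1 hy
    · obtain ⟨hya, hyA⟩ := Finset.mem_sdiff.1 hy
      exact ha (hA hx) hya (ne_of_mem_of_not_mem hx hyA)
    · exact haS (hA hx) hy
  have hdisj : Disjoint (a \ A) S := Finset.disjoint_left.2 fun x hx hxS =>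
    (haS (Finset.sdiff_subset hx) hxS).ne rfl
  have hcard : (a \ A ∪ S).card = a.card - A.card + S.card := by
    rw [Finset.card_union_of_disjoint hdisj, Finset.card_sdiff_of_subset hA]
  obtain ⟨x, hx, y, hy, hxy⟩ := Finset.one_lt_card.1 (show 1 < A.card by omega)
  exact isIndepSet_of_isCompleteBetween hG ht hcomplete (by omega) (by omega) hx hy hxy
    (ha (hA hx) (hA hy) hxy)

/-- The edges of `G` within `a ∪ S` that do not lie inside `S`. -/
def induceUnion (G : SimpleGraph V) (a S : Finset V) : SimpleGraph ↥(a ∪ S) where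
  Adj x y := G.Adj x y ∧ ¬ (x.1 ∈ S ∧ y.1 ∈ S)
  symm := ⟨fun _ _ h => ⟨h.1.symm, mt And.symm h.2⟩⟩
  loopless := ⟨fun _ h => h.1.ne rfl⟩

theorem mem_iff_mem_of_compl_induceUnion_adj (haS : G.IsCompleteBetween a S) {x y : ↥(a ∪ S)}
    (hxy : (induceUnion G a S)ᶜ.Adj x y) : x.1 ∈ S ↔ y.1 ∈ S := by
  have hdisj {x y : ↥(a ∪ S)} (hxy : ¬ (induceUnion G a S).Adj x y) (hx : x.1 ∈ S) : y.1 ∈ S := by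
    by_contra hy
    have hya := (Finset.mem_union.1 y.2).resolve_right hy
    exact hxy ⟨(haS hya hx).symm, fun hyS => hy hyS.2⟩
  exact ⟨hdisj hxy.2, hdisj hxy.symm.2⟩

theorem card_add_card_le_of_adj_or_adj (hG : (pathPlus t).Free G) (hH : (pathPlus t).Free H)
    (ht : 4 ≤ t) (ha : ∀ x ∈ a, ∀ y ∈ a, x ≠ y → G.Adj x y ∨ H.Adj x y)
    (haS : G.IsCompleteBetween a S) (hS : 2 * S.card < t) : a.card + S.card ≤ 2 * (t - 1) := by
  by_contra! hcon
  have hdisj : Disjoint a S := Finset.disjoint_left.2 fun x hx hxS => (haS hx hxS).ne rfl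
  have hcard : Fintype.card ↥(a ∪ S) = a.card + S.card := by
    rw [Fintype.card_coe, Finset.card_union_of_disjoint hdisj]
  obtain ⟨l, hl | hl, hlt⟩ :=
    exists_isPathPlus_or_compl (induceUnion G a S) (j := t) (by omega) (by omega) (by omega)
  · have := (hl.map Subtype.val_injective.injOn fun _ _ _ _ h => h.1).length_lt (by omega) hG
    rw [List.length_map] at this
    omega
  obtain ⟨e, l, rfl⟩ := hl.exists_cons_eq
  have hmem : ∀ x ∈ e :: l, e.1 ∈ S ↔ x.1 ∈ S := hl.isChain.induction _ _
    (fun _ _ hxy he => he.trans (mem_iff_mem_of_compl_induceUnion_adj haS hxy)) fun _ => Iff.rfl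
  by_cases heS : e.1 ∈ S
  · have hsub : ((e :: l).map Subtype.val).toFinset ⊆ S := fun y hy => by
      obtain ⟨y, hyl, rfl⟩ := List.mem_map.1 (List.mem_toFinset.1 hy)
      exact (hmem y hyl).1 heS
    have := Finset.card_le_card hsub
    rw [List.toFinset_card_of_nodup (hl.nodup.map Subtype.val_injective), List.length_map] at this
    omega
  · have hla (x) (hx : x ∈ e :: l) : x.1 ∈ a :=
      (Finset.mem_union.1 x.2).resolve_right (mt (hmem x hx).2 heS)
    have hmap := hl.map (H := H) Subtype.val_injective.injOn fun x hx y hy hxy =>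
      (ha x (hla x hx) y (hla y hy) (Subtype.coe_ne_coe.2 hxy.1)).resolve_left fun hG =>
        hxy.2 ⟨hG, fun hxyS => heS ((hmem x hx).2 hxyS.1)⟩
    have := hmap.length_lt (by omega) hH
    rw [List.length_map] at this
    omega

theorem weightBound_of_card_le_one (ha : a.card ≤ 1) (ht : 3 ≤ t) : WeightBound c t K a := by
  intro S hS
  have := hS.two_mul_weight_le subset_rfl
  have := succ_mul_le_maxWeight t K.card
  rw [Nat.succ_mul] at this
  omega

theorem weightBound_singleton (hfree : (pathPlus t).Free (colorGraph c r)) (ht : 3 ≤ t) :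
    WeightBound c t {r} a := by
  intro S hS
  have hr : r ∈ ({r} : Finset C) := Finset.mem_singleton_self r
  have hclique : (colorGraph c r).IsClique a := fun x hx y hy hxy =>
    colorGraph_adj.2 ⟨Finset.mem_singleton.1 (hS.color_mem hx hy hxy), hxy⟩
  have := card_add_card_le_of_isClique hfree ht hclique (hS.isCompleteBetween hr)
    (hS.two_mul_card_lt hr)
  rw [weight, Finset.sum_singleton, Finset.card_singleton, maxWeight]
  omega

theorem weightBound_pair (hr_free : (pathPlus t).Free (colorGraph c r))
    (hb_free : (pathPlus t).Free (colorGraph c b)) (ht : 4 ≤ t) (hrb : r ≠ b) :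
    WeightBound c t {r, b} a := by
  intro S hS
  have hr : r ∈ ({r, b} : Finset C) := by simp
  have hadj (x) (hx : x ∈ a) (y) (hy : y ∈ a) (hxy : x ≠ y) :
      (colorGraph c r).Adj x y ∨ (colorGraph c b).Adj x y := by
    simpa [hxy] using hS.color_mem hx hy hxy
  have := card_add_card_le_of_adj_or_adj hr_free hb_free ht hadj (hS.isCompleteBetween hr)
    (hS.two_mul_card_lt hr)
  have := hS.two_mul_card_lt (q := b) (by simp)
  rw [weight, Finset.sum_pair hrb, Finset.card_pair hrb]
  simp only [maxWeight]
  omega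

theorem weightBound {V : Type u} {c : Sym2 V → C} (hc : ¬ HasRainbowTriangle c)
    (hfree : ∀ q, (pathPlus t).Free (colorGraph c q)) (ht : 4 ≤ t) (K : Finset C) (a : Finset V) :
    WeightBound c t K a := by
  induction K using Finset.strongInduction generalizing a with | _ K ihK =>
  induction a using Finset.strongInduction with | _ a iha =>
  obtain ha | ha := le_or_gt a.card 1
  · exact weightBound_of_card_le_one ha (by omega)
  replace ha : a.Nontrivial := Finset.one_lt_card_iff_nontrivial.1 ha
  intro S hS
  obtain hK | hK := lt_or_ge K.card 3
  · interval_cases hcard : K.card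
    · obtain ⟨x, hx, y, hy, hxy⟩ := ha
      simpa [Finset.card_eq_zero.1 hcard] using hS.color_mem hx hy hxy
    · obtain ⟨r, rfl⟩ := Finset.card_eq_one.1 hcard
      exact hcard ▸ weightBound_singleton (hfree r) (by omega) S hS
    · obtain ⟨r, b, hrb, rfl⟩ := Finset.card_eq_two.1 hcard
      exact hcard ▸ weightBound_pair (hfree r) (hfree b) ht hrb S hS
  · obtain ⟨r, hr, b, hb, hrb, ι, π, hπ⟩ := exists_isGallaiPartition_of_mem hc ha
      (Finset.one_lt_card_iff_nontrivial.1 (by omega)) fun x hx y hy => hS.color_mem hx hy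
    have hb' : b ∈ K.erase r := Finset.mem_erase.2 ⟨hrb.symm, hb⟩
    have hL : insert r (insert b ((K.erase r).erase b)) = K := by
      rw [Finset.insert_erase hb', Finset.insert_erase hr]
    have hnonempty : ((K.erase r).erase b).Nonempty := by
      rw [← Finset.card_pos, Finset.card_erase_of_mem hb', Finset.card_erase_of_mem hr]
      omega
    have hstep : IsGallaiStep c t ((K.erase r).erase b) S a π r b :=
      { four_le := ht
        free := hfree
        colors_ne := hrb
        left_notMem := by simp
        right_notMem := by simp
        nonempty := hnonempty
        isAttachment := hL.symm ▸ hS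
        isGallaiPartition := hπ
        weightBound_of_ssubset_palette := fun _ hK => ihK _ (hL ▸ hK) _
        weightBound_of_ssubset := fun hA => hL.symm ▸ iha _ hA }
    exact hL ▸ hstep.two_mul_card_add_weight_le

theorem two_mul_card_le_maxWeight [Fintype V] [Fintype C] (hc : ¬ HasRainbowTriangle c)
    (hfree : ∀ q, (pathPlus t).Free (colorGraph c q)) (ht : 4 ≤ t) :
    2 * Fintype.card V ≤ maxWeight t (Fintype.card C) := by
  have hattach : IsAttachment c t Finset.univ Finset.univ fun _ => ∅ :=
    { color_mem := fun _ _ _ => Finset.mem_univ _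
      isCompleteBetween := fun _ _ _ _ hy => absurd hy (Finset.notMem_empty _)
      two_mul_card_lt := fun _ => by rw [Finset.card_empty]; omega }
  exact le_of_add_le_left ((Nat.mul_add _ _ _).ge.trans
    (weightBound hc hfree ht Finset.univ Finset.univ _ hattach))

theorem hasRainbowTriangle_or_hasMonoCopy [Fintype V] [Fintype C] (ht : 4 ≤ t)
    (hV : maxWeight t (Fintype.card C) < 2 * Fintype.card V) :
    HasRainbowTriangle c ∨ HasMonoCopy c (pathPlus t) := by
  by_contra! hc
  exact hV.not_ge <| two_mul_card_le_maxWeight hc.1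
    (fun q hq => hc.2 ⟨q, hasCopyIn_iff_isContained.2 hq⟩) ht

end UpperBound

section LowerBound

variable {V V' W C C' α : Type*} {G : SimpleGraph W} {H : SimpleGraph α} {c : Sym2 V → C}
  {x y : W × V}

/-- The lexicographic product of `G` with the edge colouring `c`: every vertex of `G` is replaced by
a copy of `c`, and a pair in different copies is coloured by whether it projects to an edge of
`G`. -/
noncomputable def blowup (G : SimpleGraph W) (c : Sym2 V → C) : Sym2 (W × V) → C ⊕ Bool :=
  Sym2.lift ⟨fun x y => if x.1 = y.1 then .inl (c s(x.2, y.2)) else .inr (G.Adj x.1 y.1),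
    fun x y => by simp only [eq_comm (a := x.1), Sym2.eq_swap (a := x.2), G.adj_comm x.1]⟩

theorem blowup_of_eq (hxy : x.1 = y.1) : blowup G c s(x, y) = .inl (c s(x.2, y.2)) := if_pos hxy

theorem blowup_of_ne (hxy : x.1 ≠ y.1) : blowup G c s(x, y) = .inr (G.Adj x.1 y.1 : Bool) :=
  if_neg hxy

theorem not_hasRainbowTriangle_blowup (hc : ¬ HasRainbowTriangle c) :
    ¬ HasRainbowTriangle (blowup G c) := by
  rintro ⟨⟨i, x⟩, ⟨j, y⟩, ⟨k, z⟩, hxy, hxz, hyz, h₁, h₂, h₃⟩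
  by_cases hij : i = j
  · subst hij
    by_cases hik : i = k
    · subst hik
      simp only [blowup_of_eq, ne_eq, Sum.inl.injEq] at h₁ h₂ h₃
      refine hc ⟨x, y, z, ?_, ?_, ?_, h₁, h₂, h₃⟩ <;> rintro rfl <;> contradiction
    · exact h₃ (by rw [blowup_of_ne hik, blowup_of_ne hik])
  by_cases hik : i = k
  · subst hik
    exact h₂ (by rw [blowup_of_ne hij, blowup_of_ne (Ne.symm hij), G.adj_comm])
  by_cases hjk : j = k
  · subst hjk
    exact h₁ (by rw [blowup_of_ne hij, blowup_of_ne hij])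
  rw [blowup_of_ne hij, blowup_of_ne hik, ne_eq, Sum.inr.injEq] at h₁
  rw [blowup_of_ne hij, blowup_of_ne hjk, ne_eq, Sum.inr.injEq] at h₂
  rw [blowup_of_ne hik, blowup_of_ne hjk, ne_eq, Sum.inr.injEq] at h₃
  exact h₂ ((Bool.eq_not.2 h₁).trans (Bool.eq_not.2 (Ne.symm h₃)).symm)

theorem cliqueFree_of_hom {n : ℕ} (f : H →g G) (hG : G.CliqueFree n) : H.CliqueFree n :=
  cliqueFree_iff.2 ⟨fun g =>
    (cliqueFree_iff.1 hG).false ⟨f.comp g.toHom, Hom.injective_of_top_hom _⟩⟩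

theorem eq_of_forall_adj_eq {β : Type*} (hH : H.Preconnected) {f : α → β}
    (hf : ∀ i j, H.Adj i j → f i = f j) (i j : α) : f i = f j := by
  obtain ⟨p⟩ := hH i j
  induction p with
  | nil => rfl
  | cons hadj _ ih => exact (hf _ _ hadj).trans ih

theorem not_hasMonoCopy_blowup (hG : G.CliqueFree 3) (hG' : Gᶜ.CliqueFree 3)
    (hH : H.Preconnected) (hH' : ¬ H.CliqueFree 3) (hc : ¬ HasMonoCopy c H) :
    ¬ HasMonoCopy (blowup G c) H := by
  rintro ⟨q | q, f, hf, hq⟩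
  · have hadj (i j) (hij : H.Adj i j) : (f i).1 = (f j).1 ∧ c s((f i).2, (f j).2) = q := by
      by_cases hfst : (f i).1 = (f j).1
      · exact ⟨hfst, Sum.inl_injective ((blowup_of_eq hfst).symm.trans (hq i j hij))⟩
      · exact absurd ((blowup_of_ne hfst).symm.trans (hq i j hij)) Sum.inr_ne_inl
    have hfst := eq_of_forall_adj_eq hH fun i j hij => (hadj i j hij).1
    exact hc ⟨q, fun i => (f i).2, fun i j hij => hf (Prod.ext (hfst i j) hij),
      fun i j hij => (hadj i j hij).2⟩
  · have hadj {i j} (hij : H.Adj i j) : (f i).1 ≠ (f j).1 ∧ (G.Adj (f i).1 (f j).1 : Bool) = q := by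
      by_cases hfst : (f i).1 = (f j).1
      · exact absurd ((blowup_of_eq hfst).symm.trans (hq i j hij)) Sum.inl_ne_inr
      · exact ⟨hfst, Sum.inr_injective ((blowup_of_ne hfst).symm.trans (hq i j hij))⟩
    cases q
    · exact hH' (cliqueFree_of_hom ⟨fun i => (f i).1, fun hij =>
        (compl_adj _ _ _).2 ⟨(hadj hij).1, of_decide_eq_false (hadj hij).2⟩⟩ hG')
    · exact hH' (cliqueFree_of_hom ⟨fun i => (f i).1, fun hij =>
        of_decide_eq_true (hadj hij).2⟩ hG)

theorem cliqueFree_cycleGraph_five : (cycleGraph 5).CliqueFree 3 := by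
  unfold CliqueFree
  decide

theorem cliqueFree_compl_cycleGraph_five : (cycleGraph 5)ᶜ.CliqueFree 3 := by
  unfold CliqueFree
  decide

theorem preconnected_pathPlus (t : ℕ) : (pathPlus t).Preconnected :=
  (pathGraph_preconnected t).mono fun _ _ hij =>
    (fromRel_adj _ _ _).2 ⟨hij.ne, (pathGraph_adj.1 hij).imp (fun h => .inl h.symm)
      fun h => .inl h.symm⟩

theorem not_cliqueFree_pathPlus {t : ℕ} (ht : 3 ≤ t) : ¬ (pathPlus t).CliqueFree 3 := by
  refine fun hfree => hfree {⟨0, by omega⟩, ⟨1, by omega⟩, ⟨2, by omega⟩} (is3Clique_iff.2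
    ⟨_, _, _, ?_, ?_, ?_, rfl⟩) <;> simp [pathPlus]

/-- The edge colouring `c` avoids `H` if it contains neither a rainbow triangle nor a monochromatic
copy of `H`. -/
def Avoids (c : Sym2 V → C) (H : SimpleGraph α) : Prop :=
  ¬ HasRainbowTriangle c ∧ ¬ HasMonoCopy c H

theorem Avoids.comp (hc : Avoids c H) {f : V' → V} (hf : f.Injective) (g : C ≃ C') :
    Avoids (g ∘ c ∘ Sym2.map f) H := by
  refine ⟨?_, ?_⟩
  · rintro ⟨x, y, z, hxy, hxz, hyz, h₁, h₂, h₃⟩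
    exact not_hasRainbowTriangle_comp_map hc.1 hf ⟨x, y, z, hxy, hxz, hyz, ne_of_apply_ne g h₁,
      ne_of_apply_ne g h₂, ne_of_apply_ne g h₃⟩
  · rintro ⟨q, i, hi, hq⟩
    exact hc.2 ⟨g.symm q, f ∘ i, hf.comp hi, fun x y hxy => g.eq_symm_apply.2 (hq x y hxy)⟩

theorem exists_avoids_pathPlus {t : ℕ} (ht : 3 ≤ t) (m : ℕ) :
    ∃ c : Sym2 (Fin ((t - 1) * 5 ^ m)) → Fin (2 * m + 1), Avoids c (pathPlus t) := by
  induction m with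
  | zero =>
    refine ⟨fun _ => 0, fun ⟨_, _, _, _, _, _, h, _⟩ => h rfl, fun ⟨_, f, hf, _⟩ => ?_⟩
    have := Fintype.card_le_of_injective f hf
    simp only [pow_zero, mul_one, Fintype.card_fin] at this
    omega
  | succ m ih =>
    obtain ⟨c, hrainbow, hmono⟩ := ih
    have hblowup : Avoids (blowup (cycleGraph 5) c) (pathPlus t) :=
      ⟨not_hasRainbowTriangle_blowup hrainbow, not_hasMonoCopy_blowup cliqueFree_cycleGraph_five
        cliqueFree_compl_cycleGraph_five (preconnected_pathPlus t) (not_cliqueFree_pathPlus ht)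
        hmono⟩
    have hV : Fintype.card (Fin 5 × Fin ((t - 1) * 5 ^ m)) = (t - 1) * 5 ^ (m + 1) := by
      simp only [Fintype.card_prod, Fintype.card_fin]
      ring
    have hC : Fintype.card (Fin (2 * m + 1) ⊕ Bool) = 2 * (m + 1) + 1 := by
      simp only [Fintype.card_sum, Fintype.card_fin, Fintype.card_bool]
      ring
    exact ⟨_, hblowup.comp (Fintype.equivFinOfCardEq hV).symm.injective
      (Fintype.equivFinOfCardEq hC)⟩

theorem grK3_eq_add_one {k n : ℕ}
    (hupper : ∀ c : Sym2 (Fin (n + 1)) → Fin k, HasRainbowTriangle c ∨ HasMonoCopy c H)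
    {c : Sym2 (Fin n) → Fin k} (hc : Avoids c H) : grK3 k H = n + 1 := by
  have hmem : n + 1 ∈
      {n : ℕ | ∀ c : Sym2 (Fin n) → Fin k, HasRainbowTriangle c ∨ HasMonoCopy c H} := hupper
  refine (Nat.sInf_le hmem).antisymm (le_csInf ⟨_, hmem⟩ fun j hj => ?_)
  by_contra! hjn
  have hrestrict := hc.comp (Fin.castLE_injective (Nat.le_of_lt_succ hjn)) (Equiv.refl (Fin k))
  exact not_or.2 hrestrict (hj _)

end LowerBound

end GallaiRamsey

/-- For every odd `k ≥ 1` and `t ≥ 4`, every `k`-coloring of the edges of the complete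
graph on `(t-1)·5^((k-1)/2) + 1` vertices contains a rainbow triangle or a monochromatic
copy of `P_t^+`; with the matching lower bound,
`gr_k(K_3 : P_t^+) = (t-1)·5^((k-1)/2) + 1`. -/
theorem gallaiRamsey_pathPlus_odd (k t : ℕ) (hk : 1 ≤ k) (hko : Odd k) (ht : 4 ≤ t) :
    (∀ c : Sym2 (Fin ((t - 1) * 5 ^ ((k - 1) / 2) + 1)) → Fin k,
      HasRainbowTriangle c ∨ HasMonoCopy c (pathPlus t)) ∧
    grK3 k (pathPlus t) = (t - 1) * 5 ^ ((k - 1) / 2) + 1 := by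
  obtain ⟨m, rfl⟩ := hko
  rw [show (2 * m + 1 - 1) / 2 = m by omega]
  have hupper (c : Sym2 (Fin ((t - 1) * 5 ^ m + 1)) → Fin (2 * m + 1)) :
      HasRainbowTriangle c ∨ HasMonoCopy c (pathPlus t) := by
    apply GallaiRamsey.hasRainbowTriangle_or_hasMonoCopy ht
    rw [Fintype.card_fin, Fintype.card_fin, GallaiRamsey.maxWeight_two_mul_add_one]
    omega
  obtain ⟨c, hc⟩ := GallaiRamsey.exists_avoids_pathPlus (by omega : 3 ≤ t) m
  exact ⟨hupper, GallaiRamsey.grK3_eq_add_one hupper hc⟩
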